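/- arXiv:1308.4439 — 2 statements merged into one kernel-verified Lean document; each statement's English description precedes it below -/
import Mathlib

section
/- Assume a_0 is the unique point of ℤ^n lying in the interior of Δ, the convex hull of a_1,…,a_N in ℝ^n. Suppose ξ ∈ S satisfies α*(ξ) = κ·ξ for some κ ∈ K, that ξ_{â_0} is an invertible element of R, and that ‖ξ‖ = ‖ξ_{â_0}‖. Then the ratio ξ_{â_0}(λ)/ξ_{â_0}(λ^p) — where ξ_{â_0}(λ^p) denotes ξ_{â_0} with each λ_i/λ_0 replaced by λ_i^p/λ_0^p — belongs to R'. -/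
open scoped BigOperators Classical

namespace AHG

/-- `hat v = (1, v) ∈ ℤ^{n+1}`: coordinate `0` equals `1`, the rest is `v`. -/
def hat {n : ℕ} (v : Fin n → ℤ) : Fin (n + 1) → ℤ := Fin.cons 1 v

/-- The coefficients `b_i` of the Dwork series
`θ(t) = exp(π(t - t^p)) = exp(πt)·exp(-πt^p) = Σ b_i t^i`;
explicitly `b_i = Σ_{j + p k = i} π^{j+k} (-1)^k / (j! k!)`. -/
noncomputable def dworkB (p : ℕ) {K : Type*} [Field K] (π : K) (i : ℕ) : K :=
  ∑ k ∈ Finset.range (i + 1),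
    if p * k ≤ i then
      ((-1 : K) ^ k * π ^ (i - p * k + k)) /
        ((Nat.factorial (i - p * k) : K) * (Nat.factorial k : K))
    else 0

/-- The real cone `C` generated by `â_0, …, â_N`. -/
def cone {n N : ℕ} (a : Fin (N + 1) → Fin n → ℤ) : Set (Fin (n + 1) → ℝ) :=
  {x | ∃ t : Fin (N + 1) → ℝ, (∀ j, 0 ≤ t j) ∧
      x = ∑ j, t j • fun i => (hat (a j) i : ℝ)}

/-- `M = C ∩ ℤA`. -/
def latticeM {n N : ℕ} (a : Fin (N + 1) → Fin n → ℤ) : Set (Fin (n + 1) → ℤ) :=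
  {μ | (fun i => (μ i : ℝ)) ∈ cone a ∧
      μ ∈ AddSubgroup.closure (Set.range fun j => hat (a j))}

/-- `M°`: the elements of `M` lying on no proper (exposed) face of `C`, i.e. every linear
functional nonnegative on `C` and vanishing at `μ` vanishes identically on `C`. -/
def latticeMint {n N : ℕ} (a : Fin (N + 1) → Fin n → ℤ) : Set (Fin (n + 1) → ℤ) :=
  {μ | μ ∈ latticeM a ∧
      ∀ ℓ : (Fin (n + 1) → ℝ) →ₗ[ℝ] ℝ, (∀ x ∈ cone a, 0 ≤ ℓ x) →
        ℓ (fun i => (μ i : ℝ)) = 0 → ∀ x ∈ cone a, ℓ x = 0}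

/-- `a 0` is the unique lattice point interior to `Δ = conv(a 1, …, a N)`. -/
def uniqueInteriorPoint {n N : ℕ} (a : Fin (N + 1) → Fin n → ℤ) : Prop :=
  (fun i => (a 0 i : ℝ)) ∈
      interior (convexHull ℝ (Set.range fun j : Fin N => fun i => (a j.succ i : ℝ))) ∧
    ∀ v : Fin n → ℤ,
      (fun i => (v i : ℝ)) ∈
          interior (convexHull ℝ (Set.range fun j : Fin N => fun i => (a j.succ i : ℝ))) →
        v = a 0

/-- The set `L_+`, identified with the tuples `(l_1,…,l_N) ∈ ℤ_{≥0}^N` such that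
`Σ l_i â_i = (Σ l_i) â_0` (then `l_0 = -Σ l_i`). -/
def LplusSet {n N : ℕ} (a : Fin (N + 1) → Fin n → ℤ) : Set (Fin N → ℕ) :=
  {l | ∑ i : Fin N, l i • hat (a i.succ) = (∑ i : Fin N, l i) • hat (a 0)}

/-- The norm (sup of coefficient norms) of an element of `R`, i.e. of a formal power series
in the variables `λ_i/λ_0`, `i = 1, …, N`. -/
noncomputable def Rnorm {N : ℕ} {K : Type*} [NormedField K]
    (f : MvPowerSeries (Fin N) K) : ℝ :=
  ⨆ ν : Fin N →₀ ℕ, ‖f ν‖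

/-- Membership in `R`: bounded coefficients. -/
def memR {N : ℕ} {K : Type*} [NormedField K] (f : MvPowerSeries (Fin N) K) : Prop :=
  BddAbove (Set.range fun ν : Fin N →₀ ℕ => ‖f ν‖)

/-- Norm-convergence (in the sup norm of `R`) of a series of elements of `R` to `g`. -/
def HasSumR {ι : Type*} {N : ℕ} {K : Type*} [NormedField K]
    (f : ι → MvPowerSeries (Fin N) K) (g : MvPowerSeries (Fin N) K) : Prop :=
  Filter.Tendsto (fun s : Finset ι => Rnorm (g - ∑ i ∈ s, f i)) Filter.atTop (nhds 0)

/-- Invertibility in `R`. -/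
def invR {N : ℕ} {K : Type*} [NormedField K] (f : MvPowerSeries (Fin N) K) : Prop :=
  memR f ∧ ∃ g : MvPowerSeries (Fin N) K, memR g ∧ f * g = 1

/-- `B_μ(1, y_1, …, y_N)` as a power series (in fact a polynomial) in `y_i = λ_i/λ_0`:
the coefficient of `y^ν` is `b_{ν_0} b_{ν_1} ⋯ b_{ν_N}` where `ν_0 = μ_0 - Σ ν_i`,
whenever `(ν_0, ν_1, …, ν_N)` is a nonnegative solution of `Σ ν_i â_i = μ`, and `0` otherwise. -/
noncomputable def Bone (p : ℕ) {n N : ℕ} (a : Fin (N + 1) → Fin n → ℤ)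
    {K : Type*} [Field K] (π : K) (μ : Fin (n + 1) → ℤ) : MvPowerSeries (Fin N) K :=
  fun ν =>
    if 0 ≤ μ 0 - ∑ i : Fin N, (ν i : ℤ) ∧
        (μ 0 - ∑ i : Fin N, (ν i : ℤ)) • hat (a 0) +
          ∑ i : Fin N, (ν i : ℤ) • hat (a i.succ) = μ then
      dworkB p π (μ 0 - ∑ i : Fin N, (ν i : ℤ)).toNat * ∏ i : Fin N, dworkB p π (ν i)
    else 0

/-- The substitution `λ_i/λ_0 ↦ λ_i^p/λ_0^p` on `R`, i.e. `ξ(λ) ↦ ξ(λ^p)`. -/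
noncomputable def frobR (p : ℕ) {N : ℕ} {K : Type*} [Field K]
    (f : MvPowerSeries (Fin N) K) : MvPowerSeries (Fin N) K :=
  fun ν => if h : ∃ ν' : Fin N →₀ ℕ, p • ν' = ν then f h.choose else 0

/-- The term indexed by `ν ∈ M°` in the series defining `η_ρ`:
`π^{ρ_0-ν_0} B_{pν-ρ}(1, λ_1/λ_0, …, λ_N/λ_0) ξ_ν(λ^p)` when `pν - ρ ∈ M`, else `0`. -/
noncomputable def etaTerm (p : ℕ) {n N : ℕ} (a : Fin (N + 1) → Fin n → ℤ)
    {K : Type*} [Field K] (π : K)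
    (ξ : {μ : Fin (n + 1) → ℤ // μ ∈ latticeMint a} → MvPowerSeries (Fin N) K)
    (ρ : Fin (n + 1) → ℤ) (ν : {μ : Fin (n + 1) → ℤ // μ ∈ latticeMint a}) :
    MvPowerSeries (Fin N) K :=
  if (p : ℤ) • ν.1 - ρ ∈ latticeM a then
    π ^ (ρ 0 - ν.1 0) • (Bone p a π ((p : ℤ) • ν.1 - ρ) * frobR p (ξ ν))
  else 0


/-- The index type `M°` (as a subtype). -/
abbrev Msub {n N : ℕ} (a : Fin (N + 1) → Fin n → ℤ) : Type _ :=
  {μ : Fin (n + 1) → ℤ // μ ∈ latticeMint a}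

/-- Membership in `S`: a family `(ξ_μ)_{μ ∈ M°}` of elements of `R` with uniformly
bounded coefficients. -/
def memS {n N : ℕ} (a : Fin (N + 1) → Fin n → ℤ) {K : Type*} [NormedField K]
    (ξ : {μ : Fin (n + 1) → ℤ // μ ∈ latticeMint a} → MvPowerSeries (Fin N) K) : Prop :=
  BddAbove (Set.range
    fun q : {μ : Fin (n + 1) → ℤ // μ ∈ latticeMint a} × (Fin N →₀ ℕ) => ‖ξ q.1 q.2‖)

/-- The norm on `S`. -/
noncomputable def Snorm {n N : ℕ} (a : Fin (N + 1) → Fin n → ℤ) {K : Type*} [NormedField K]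
    (ξ : {μ : Fin (n + 1) → ℤ // μ ∈ latticeMint a} → MvPowerSeries (Fin N) K) : ℝ :=
  ⨆ μ : {μ : Fin (n + 1) → ℤ // μ ∈ latticeMint a}, Rnorm (ξ μ)

/-- The truncation `Φ_1` of `Φ`, as a function of `λ = (λ_0, …, λ_N)`. -/
noncomputable def Phi1 (p : ℕ) {n N : ℕ} (a : Fin (N + 1) → Fin n → ℤ)
    {K : Type*} [Field K] (lam : Fin (N + 1) → K) : K :=
  ∑ l ∈ (Fintype.piFinset fun _ : Fin N => Finset.range p).filter
      (fun l => l ∈ LplusSet a ∧ ∑ i : Fin N, l i ≤ p - 1),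
    (-1 : K) ^ (∑ i : Fin N, l i) * (Nat.multinomial Finset.univ l : K) *
      ∏ i : Fin N, (lam i.succ / lam 0) ^ l i

/-- The open polydisk `𝒟`. -/
def Dopen {N : ℕ} {K : Type*} [NormedField K] : Set (Fin (N + 1) → K) :=
  {lam | lam 0 ≠ 0 ∧ ∀ i : Fin N, ‖lam i.succ / lam 0‖ < 1}

/-- The region `𝒟_+`. -/
def Dplus (p : ℕ) {n N : ℕ} (a : Fin (N + 1) → Fin n → ℤ) {K : Type*} [NormedField K] :
    Set (Fin (N + 1) → K) :=
  {lam | lam 0 ≠ 0 ∧ (∀ i : Fin N, ‖lam i.succ / lam 0‖ ≤ 1) ∧ ‖Phi1 p a lam‖ = 1}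

/-- `f` is (on `𝒟_+`) a rational function of `λ_1/λ_0, …, λ_N/λ_0` defined at every
point of `𝒟_+`. -/
def RatOnDplus (p : ℕ) {n N : ℕ} (a : Fin (N + 1) → Fin n → ℤ) {K : Type*} [NormedField K]
    (f : (Fin (N + 1) → K) → K) : Prop :=
  ∃ q r : MvPolynomial (Fin N) K,
    (∀ lam ∈ Dplus p a (K := K), MvPolynomial.eval (fun i => lam i.succ / lam 0) r ≠ 0) ∧
    ∀ lam ∈ Dplus p a (K := K),
      f lam = MvPolynomial.eval (fun i => lam i.succ / lam 0) q /
        MvPolynomial.eval (fun i => lam i.succ / lam 0) r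

/-- `F` is a uniform limit on `𝒟_+` of rational functions in the `λ_i/λ_0` defined
at every point of `𝒟_+`. -/
def UnifLimitRat (p : ℕ) {n N : ℕ} (a : Fin (N + 1) → Fin n → ℤ) {K : Type*} [NormedField K]
    (F : (Fin (N + 1) → K) → K) : Prop :=
  ∃ u : ℕ → (Fin (N + 1) → K) → K, (∀ k, RatOnDplus p a (u k)) ∧
    TendstoUniformlyOn u F Filter.atTop (Dplus p a (K := K))

/-- Membership in `R'`: the power series converges on `𝒟` and its sum extends to an
element of `R'`, i.e. to a uniform limit on `𝒟_+` of rational functions in the `λ_i/λ_0`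
defined at every point of `𝒟_+`. -/
def memR' (p : ℕ) {n N : ℕ} (a : Fin (N + 1) → Fin n → ℤ) {K : Type*} [NormedField K]
    (c : MvPowerSeries (Fin N) K) : Prop :=
  ∃ F : (Fin (N + 1) → K) → K, UnifLimitRat p a F ∧
    ∀ lam ∈ Dopen (N := N) (K := K),
      HasSum (fun ν : Fin N →₀ ℕ => c ν * ∏ i : Fin N, (lam i.succ / lam 0) ^ ν i) (F lam)

/-- Invertibility in `R'`. -/
def invR' (p : ℕ) {n N : ℕ} (a : Fin (N + 1) → Fin n → ℤ) {K : Type*} [NormedField K]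
    (f : MvPowerSeries (Fin N) K) : Prop :=
  memR' p a f ∧ ∃ g : MvPowerSeries (Fin N) K, memR' p a g ∧ f * g = 1

/-- Membership in `S'`. -/
def memS' (p : ℕ) {n N : ℕ} (a : Fin (N + 1) → Fin n → ℤ) {K : Type*} [NormedField K]
    (ξ : {μ : Fin (n + 1) → ℤ // μ ∈ latticeMint a} → MvPowerSeries (Fin N) K) : Prop :=
  memS a ξ ∧ ∀ μ, memR' p a (ξ μ)

/-- Membership in `T`: `ξ ∈ S`, `ξ_{â_0} = 1` and `‖ξ‖ = 1`; the distinguished index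
`μ0 ∈ M°` is the point `â_0`. -/
def memT {n N : ℕ} (a : Fin (N + 1) → Fin n → ℤ) {K : Type*} [NormedField K]
    (μ0 : {μ : Fin (n + 1) → ℤ // μ ∈ latticeMint a})
    (ξ : {μ : Fin (n + 1) → ℤ // μ ∈ latticeMint a} → MvPowerSeries (Fin N) K) : Prop :=
  memS a ξ ∧ ξ μ0 = 1 ∧ Snorm a ξ = 1

/-- `ζ` is a value of the map `β` at `ξ`: `ζ = α*(ξ)/η_{â_0}`, where
`α*(ξ) = (η_ρ)_{ρ ∈ M°}` is given by the norm-convergent series of `etaTerm`s. -/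
def isBeta (p : ℕ) {n N : ℕ} (a : Fin (N + 1) → Fin n → ℤ) {K : Type*} [NormedField K] (π : K)
    (μ0 : {μ : Fin (n + 1) → ℤ // μ ∈ latticeMint a})
    (ξ ζ : {μ : Fin (n + 1) → ℤ // μ ∈ latticeMint a} → MvPowerSeries (Fin N) K) : Prop :=
  ∃ η : {μ : Fin (n + 1) → ℤ // μ ∈ latticeMint a} → MvPowerSeries (Fin N) K,
    (∀ ρ, HasSumR (etaTerm p a π ξ ρ.1) (η ρ)) ∧ ∀ ρ, ζ ρ = η ρ * (η μ0)⁻¹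

/-- The coefficients `ξ_ρ` (Eq. (3.4) of the paper) of
`ξ(λ,x) = γ°(G(λ_0,x) ∏_{i=1}^N exp(πλ_i x^{â_i}))`:
`ξ_ρ = Σ (-1)^{ρ_0-1+Σl_i} (ρ_0-1+Σl_i)!/(l_1!⋯l_N!) ∏ (λ_i/λ_0)^{l_i}`, summed over
`(l_1,…,l_N) ∈ ℤ_{≥0}^N` such that `l_0 := ρ_0-1+Σl_i ≥ 0` and
`Σ l_i â_i - (l_0+1) â_0 = -ρ`. -/
noncomputable def xiRho {n N : ℕ} (a : Fin (N + 1) → Fin n → ℤ) (K : Type*) [Field K]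
    (ρ : Fin (n + 1) → ℤ) : MvPowerSeries (Fin N) K :=
  fun l =>
    if 0 ≤ ρ 0 - 1 + ∑ i : Fin N, (l i : ℤ) ∧
        (∑ i : Fin N, (l i : ℤ) • hat (a i.succ)) -
          (ρ 0 + ∑ i : Fin N, (l i : ℤ)) • hat (a 0) = -ρ then
      (-1 : K) ^ (ρ 0 - 1 + ∑ i : Fin N, (l i : ℤ)) *
        ((ρ 0 - 1 + ∑ i : Fin N, (l i : ℤ)).toNat.factorial : K) /
        ((∏ i : Fin N, (l i).factorial : ℕ) : K)
    else 0

/-- The series `Φ`, as a formal power series in the variables `λ_i/λ_0`. -/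
noncomputable def PhiSeries {n N : ℕ} (a : Fin (N + 1) → Fin n → ℤ) (K : Type*) [Field K] :
    MvPowerSeries (Fin N) K :=
  fun l =>
    if (fun i => l i) ∈ LplusSet a then
      (-1 : K) ^ (∑ i : Fin N, l i) * (Nat.multinomial Finset.univ l : K)
    else 0

/-- The truncation `Φ_1` of `Φ`, as a formal power series in the variables `λ_i/λ_0`. -/
noncomputable def Phi1Series (p : ℕ) {n N : ℕ} (a : Fin (N + 1) → Fin n → ℤ)
    (K : Type*) [Field K] : MvPowerSeries (Fin N) K :=
  fun l =>
    if (fun i => l i) ∈ LplusSet a ∧ ∑ i : Fin N, l i ≤ p - 1 then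
      (-1 : K) ^ (∑ i : Fin N, l i) * (Nat.multinomial Finset.univ l : K)
    else 0

/-- `B_μ(λ_0, …, λ_N)` as a function of `λ` (a finite sum; `finsum` junk value `0`
is irrelevant since the relevant index set is finite). -/
noncomputable def Bfull (p : ℕ) {n N : ℕ} (a : Fin (N + 1) → Fin n → ℤ)
    {K : Type*} [Field K] (π : K) (μ : Fin (n + 1) → ℤ) (lam : Fin (N + 1) → K) : K :=
  finsum fun ν : Fin (N + 1) → ℕ =>
    if ∑ j, ν j • hat (a j) = μ then
      (∏ j, dworkB p π (ν j)) * ∏ j, lam j ^ ν j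
    else 0

end AHG

open scoped BigOperators Classical

namespace AHGp
open PowerSeries

/-- `exp (c t^s)`. -/
noncomputable def ex {k : Type*} [Field k] [CharZero k] (s : ℕ) (hs : s ≠ 0) (c : k) : PowerSeries k :=
  letI : Algebra ℚ k := DivisionRing.toRatAlgebra
  expand s hs (rescale c (exp k))

section
variable {k : Type*} [Field k] [CharZero k]

lemma coeff_ex_mul (s : ℕ) (hs : s ≠ 0) (c : k) (m : ℕ) :
    coeff (s * m) (ex s hs c) = c ^ m / (m.factorial : k) := by
  letI : Algebra ℚ k := DivisionRing.toRatAlgebra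
  unfold ex
  rw [coeff_expand_mul, coeff_rescale, coeff_exp]
  simp [div_eq_mul_inv]

lemma coeff_ex_of_not_dvd (s : ℕ) (hs : s ≠ 0) (c : k) (m : ℕ) (h : ¬ s ∣ m) :
    coeff m (ex s hs c) = 0 := by
  unfold ex
  rw [coeff_expand_of_not_dvd _ _ _ h]

lemma ex_mul (s : ℕ) (hs : s ≠ 0) (c d : k) : ex s hs c * ex s hs d = ex s hs (c + d) := by
  unfold ex
  rw [← map_mul, exp_mul_exp_eq_exp_add]

lemma ex_zero (s : ℕ) (hs : s ≠ 0) : ex s hs (0 : k) = 1 := by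
  letI : Algebra ℚ k := DivisionRing.toRatAlgebra
  unfold ex
  rw [rescale_zero]
  simp

lemma ex_pow (s : ℕ) (hs : s ≠ 0) (c : k) (n : ℕ) : ex s hs c ^ n = ex s hs (n * c) := by
  induction n with
  | zero => simp [ex_zero]
  | succ n ih => rw [pow_succ, ih, ex_mul]; congr 1; push_cast; ring

lemma expand_ex (p : ℕ) (hp : p ≠ 0) (s : ℕ) (hs : s ≠ 0) (c : k) :
    expand p hp (ex s hs c) = ex (p * s) (mul_ne_zero hp hs) c := by
  unfold ex
  rw [expand_mul]

/-- truncated Artin-Hasse series -/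
noncomputable def EK (p : ℕ) (hp : p ≠ 0) (k : Type*) [Field k] [CharZero k] (K : ℕ) :
    PowerSeries k :=
  ∏ j ∈ Finset.range (K + 1), ex (p ^ j) (pow_ne_zero j hp) ((p : k) ^ j)⁻¹

lemma ex_congr {s s' : ℕ} (h : s = s') (hs : s ≠ 0) (hs' : s' ≠ 0) {c c' : k} (hc : c = c') :
    ex s hs c = ex s' hs' c' := by subst h; subst hc; rfl

lemma EK_func (p : ℕ) (hp : p ≠ 0) (K : ℕ) :
    EK p hp k K ^ p * ex (p ^ (K + 1)) (pow_ne_zero _ hp) ((p : k) ^ K)⁻¹ =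
      ex 1 one_ne_zero (p : k) * expand p hp (EK p hp k K) := by
  have hpk : (p : k) ≠ 0 := by exact_mod_cast hp
  unfold EK
  rw [map_prod, ← Finset.prod_pow]
  simp only [ex_pow, expand_ex]
  have h1 : ∀ j : ℕ, ex (p * p ^ j) (mul_ne_zero hp (pow_ne_zero j hp)) ((p : k) ^ j)⁻¹ =
      ex (p ^ (j + 1)) (pow_ne_zero _ hp) ((p : k) * ((p : k) ^ (j+1))⁻¹) := by
    intro j
    apply ex_congr
    · ring
    · field_simp
      ring
  simp only [h1]
  rw [Finset.prod_range_succ' , Finset.prod_range_succ, mul_comm (ex 1 _ _), mul_right_comm]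
  congr 1
  · congr 1
    apply ex_congr rfl
    field_simp
    ring
  · apply ex_congr <;> simp

end

section
variable (p : ℕ) [hpf : Fact p.Prime]

lemma pne : p ≠ 0 := hpf.out.ne_zero

lemma norm_sum_le' {K : Type*} [NormedField K] [IsUltrametricDist K] {ι : Type*} (s : Finset ι)
    (f : ι → K) (c : ℝ) (hc : 0 ≤ c) (h : ∀ i ∈ s, ‖f i‖ ≤ c) : ‖∑ i ∈ s, f i‖ ≤ c :=
  IsUltrametricDist.norm_sum_le_of_forall_le_of_nonneg hc h

lemma norm_pow_div_factorial (j : ℕ) (hj : j ≠ 0) :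
    ‖(p : ℚ_[p]) ^ j / (j.factorial : ℚ_[p])‖ ≤ ‖(p : ℚ_[p])‖ := by
  have hv : padicValNat p j.factorial < j := by
    have h := sub_one_mul_padicValNat_factorial_lt_of_ne_zero p hj
    have : 1 ≤ p - 1 := by have := hpf.out.two_le; omega
    nlinarith
  obtain ⟨d, hd⟩ : ∃ d, j.factorial = p ^ padicValNat p j.factorial * d :=
    pow_padicValNat_dvd
  have hdn : ¬ p ∣ d := by
    intro hdd
    have : p ^ (padicValNat p j.factorial + 1) ∣ j.factorial := by
      rw [pow_succ]; conv_rhs => rw [hd]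
      exact mul_dvd_mul_left _ hdd
    exact pow_succ_padicValNat_not_dvd (Nat.factorial_ne_zero j) this
  have hd1 : ‖(d : ℚ_[p])‖ = 1 := by
    rw [Padic.norm_natCast_eq_one_iff]
    exact (Nat.Prime.coprime_iff_not_dvd hpf.out).2 hdn
  rw [hd, norm_div]
  push_cast
  rw [norm_mul, hd1, mul_one, norm_pow, norm_pow]
  have hp0 : 0 < ‖(p : ℚ_[p])‖ := by
    rw [norm_pos_iff]; exact_mod_cast pne p
  have hp1 : ‖(p : ℚ_[p])‖ ≤ 1 := by
    exact_mod_cast Padic.norm_int_le_one (p := p) (p : ℤ)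
  rw [div_le_iff₀ (by positivity), ← pow_succ']
  exact pow_le_pow_of_le_one hp0.le hp1 hv


lemma constantCoeff_ex {k : Type*} [Field k] [CharZero k] (s : ℕ) (hs : s ≠ 0) (c : k) :
    constantCoeff (ex s hs c) = 1 := by
  have := coeff_ex_mul s hs c 0
  simpa using this

lemma ex_eq_one_add {k : Type*} [Field k] [CharZero k] (s : ℕ) (hs : s ≠ 0) (c : k) :
    ∃ h, ex s hs c = 1 + X ^ s * h := by
  have : (X : PowerSeries k) ^ s ∣ ex s hs c - 1 := by
    rw [X_pow_dvd_iff]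
    intro m hm
    rw [map_sub, coeff_one]
    split_ifs with h0
    · subst h0; simp [constantCoeff_ex]
    · rw [coeff_ex_of_not_dvd, sub_zero]
      intro hd
      exact h0 (Nat.eq_zero_of_dvd_of_lt hd hm)
  obtain ⟨h, hh⟩ := this
  exact ⟨h, by rw [← hh]; ring⟩

lemma EK_int (K : ℕ) : ∀ i < p ^ (K + 1), ‖coeff i (EK p (pne p) ℚ_[p] K)‖ ≤ 1 := by
  intro i
  induction i using Nat.strong_induction_on with
  | _ i ih =>
  intro hi
  have hE0 : constantCoeff (EK p (pne p) ℚ_[p] K) = 1 := by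
    unfold EK
    rw [map_prod]
    exact Finset.prod_eq_one (fun j _ => constantCoeff_ex _ _ _)
  rcases Nat.eq_zero_or_pos i with h0 | hpos
  · subst h0
    simp [hE0]
  set E := EK p (pne p) ℚ_[p] K with hE
  have hf := EK_func (k := ℚ_[p]) p (pne p) K
  rw [← hE] at hf
  have hz0 : ∀ j, ∃ z : ℤ_[p], j < i → (z : ℚ_[p]) = coeff j E := by
    intro j
    by_cases hj : j < i
    · exact ⟨⟨coeff j E, ih j hj (hj.trans hi)⟩, fun _ => rfl⟩
    · exact ⟨0, fun h => absurd h hj⟩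
  choose z hz using hz0
  let gZ : Polynomial ℤ_[p] := ∑ j ∈ Finset.range i,
    Polynomial.monomial j (z j)
  have hgZ : ∀ j, ((gZ.coeff j : ℤ_[p]) : ℚ_[p]) = if j < i then coeff j E else 0 := by
    intro j
    simp only [gZ, Polynomial.finset_sum_coeff, Polynomial.coeff_monomial]
    rw [Finset.sum_ite_eq']
    by_cases hj : j < i
    · simp only [Finset.mem_range, hj, if_true]
      exact hz j hj
    · simp [hj]
  let G : PowerSeries ℚ_[p] := ((gZ.map (PadicInt.Coe.ringHom (p := p)) : Polynomial ℚ_[p]) : PowerSeries ℚ_[p])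
  have hG : ∀ j, coeff j G = if j < i then coeff j E else 0 := by
    intro j
    simp only [G, Polynomial.coeff_coe, Polynomial.coeff_map]
    exact hgZ j
  obtain ⟨h, hh⟩ : ∃ h, E = G + X ^ i * h := by
    have : (X : PowerSeries ℚ_[p]) ^ i ∣ E - G := by
      rw [X_pow_dvd_iff]
      intro m hm
      rw [map_sub, hG, if_pos hm, sub_self]
    obtain ⟨h, hh⟩ := this
    exact ⟨h, by rw [← hh]; ring⟩
  have hG0 : coeff 0 G = 1 := by
    rw [hG, if_pos hpos]; simpa using hE0
  have hei : coeff i E = constantCoeff h := by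
    conv_lhs => rw [hh]
    rw [map_add, hG, if_neg (lt_irrefl i)]
    have := coeff_X_pow_mul h i 0
    simpa using this
  -- left side
  have hL : coeff i (E ^ p) = coeff i (G ^ p) + p * coeff i E := by
    obtain ⟨q, hq⟩ := Polynomial.powAddExpansion G (X ^ i * h) p
    rw [hei]
    conv_lhs => rw [hh, hq]
    rw [map_add, map_add]
    have e1 : (p : PowerSeries ℚ_[p]) * G ^ (p - 1) * (X ^ i * h) =
        X ^ i * ((p : PowerSeries ℚ_[p]) * G ^ (p - 1) * h) := by ring
    have e2 : q * (X ^ i * h) ^ 2 = X ^ i * (X * (X ^ (i - 1) * q * h ^ 2)) := by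
      obtain ⟨i', rfl⟩ : ∃ i', i = i' + 1 := ⟨i - 1, by omega⟩
      simp only [Nat.add_sub_cancel]
      ring
    rw [e1, e2]
    have e3 := coeff_X_pow_mul ((p : PowerSeries ℚ_[p]) * G ^ (p - 1) * h) i 0
    have e4 := coeff_X_pow_mul (X * (X ^ (i - 1) * q * h ^ 2)) i 0
    rw [zero_add] at e3 e4
    rw [e3, e4]
    have hG0' : constantCoeff G = 1 := by simpa using hG0
    simp [hG0']
  have hL2 : coeff i (E ^ p * ex (p ^ (K + 1)) (pow_ne_zero _ (pne p)) ((p : ℚ_[p]) ^ K)⁻¹) =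
      coeff i (E ^ p) := by
    obtain ⟨w, hw⟩ := ex_eq_one_add (p ^ (K + 1)) (pow_ne_zero _ (pne p)) ((p : ℚ_[p]) ^ K)⁻¹
    rw [hw, mul_add, mul_one, map_add, mul_left_comm, coeff_X_pow_mul', if_neg (by omega), add_zero]
  have hp0 : 0 < ‖(p : ℚ_[p])‖ := by
    rw [norm_pos_iff]; exact_mod_cast pne p
  have hexp : ∀ l ≤ i, ‖coeff l (expand p (pne p) E)‖ ≤ 1 := by
    intro l hl
    rw [coeff_expand]
    split_ifs with hd
    · have : l / p < i := by
        rcases Nat.eq_zero_or_pos l with h0 | h0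
        · simpa [h0] using hpos
        · exact (Nat.div_lt_self h0 hpf.out.one_lt).trans_le hl
      exact ih _ this (this.trans hi)
    · simp
  -- right side
  have hR : ‖coeff i (ex 1 one_ne_zero (p : ℚ_[p]) * expand p (pne p) E) -
      coeff i (expand p (pne p) E)‖ ≤ ‖(p : ℚ_[p])‖ := by
    rw [coeff_mul, ← Finset.add_sum_erase _ _ (a := (0, i)) (by simp)]
    have : coeff 0 (ex 1 one_ne_zero (p : ℚ_[p])) = 1 := by simpa using constantCoeff_ex 1 one_ne_zero (p : ℚ_[p])
    simp only [this, one_mul, add_sub_cancel_left]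
    apply norm_sum_le' _ _ _ hp0.le
    rintro ⟨a, b⟩ hab
    simp only [Finset.mem_erase, Finset.HasAntidiagonal.mem_antidiagonal, ne_eq, Prod.mk.injEq, not_and] at hab
    have ha : a ≠ 0 := by
      intro h; exact hab.1 h (by omega)
    have := coeff_ex_mul 1 one_ne_zero (p : ℚ_[p]) a
    rw [one_mul] at this
    rw [this, norm_mul]
    calc _ ≤ ‖(p : ℚ_[p])‖ * 1 := by
          apply mul_le_mul (norm_pow_div_factorial p a ha) (hexp b (by omega)) (norm_nonneg _) hp0.le
      _ = _ := mul_one _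
  have hFr : ‖coeff i (expand p (pne p) E) - coeff i (G ^ p)‖ ≤ ‖(p : ℚ_[p])‖ := by
    have h1 : coeff i (expand p (pne p) E) = ((Polynomial.expand ℤ_[p] p gZ).coeff i : ℤ_[p]) := by
      rw [coeff_expand, Polynomial.coeff_expand hpf.out.pos]
      split_ifs with hd
      · rw [hgZ, if_pos (Nat.div_lt_self hpos hpf.out.one_lt)]
      · simp
    have h2 : coeff i (G ^ p) = ((gZ ^ p).coeff i : ℤ_[p]) := by
      simp only [G]
      rw [← Polynomial.coe_pow, ← Polynomial.map_pow, Polynomial.coeff_coe, Polynomial.coeff_map]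
      rfl
    have h3 : (PadicInt.toZMod (p := p)) ((Polynomial.expand ℤ_[p] p gZ).coeff i - (gZ ^ p).coeff i) = 0 := by
      rw [map_sub, ← Polynomial.coeff_map, ← Polynomial.coeff_map, Polynomial.map_expand,
        Polynomial.map_pow, ZMod.expand_card, sub_self]
    rw [h1, h2]
    have h4 : (Polynomial.expand ℤ_[p] p gZ).coeff i - (gZ ^ p).coeff i ∈ RingHom.ker (PadicInt.toZMod (p := p)) := h3
    rw [PadicInt.ker_toZMod, PadicInt.maximalIdeal_eq_span_p, Ideal.mem_span_singleton] at h4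
    obtain ⟨w, hw⟩ := h4
    rw [← PadicInt.coe_sub, hw]
    push_cast
    rw [norm_mul]
    calc _ ≤ ‖(p : ℚ_[p])‖ * 1 := by
          apply mul_le_mul_of_nonneg_left _ hp0.le
          exact w.2
      _ = _ := mul_one _
  have hfin : (p : ℚ_[p]) * coeff i E =
      (coeff i (ex 1 one_ne_zero (p : ℚ_[p]) * expand p (pne p) E) -
      coeff i (expand p (pne p) E)) + (coeff i (expand p (pne p) E) - coeff i (G ^ p)) := by
    rw [← hf, hL2, hL]; ring
  have : ‖(p : ℚ_[p]) * coeff i E‖ ≤ ‖(p : ℚ_[p])‖ := by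
    rw [hfin]
    exact (IsUltrametricDist.norm_add_le_max _ _).trans (max_le hR hFr)
  rw [norm_mul] at this
  exact le_of_mul_le_mul_left (by linarith) hp0

/-- denominators -/
def Dn (i : ℕ) : ℕ := p ^ (2 * (i / p ^ 2)) * (i / p ^ 2).factorial

lemma Dn_mul_dvd (i j : ℕ) : Dn p i * Dn p j ∣ Dn p (i + j) := by
  unfold Dn
  have h : i / p ^ 2 + j / p ^ 2 ≤ (i + j) / p ^ 2 := by
    rw [Nat.le_div_iff_mul_le (pow_pos hpf.out.pos 2)]
    have h1 := Nat.div_mul_le_self i (p ^ 2)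
    have h2 := Nat.div_mul_le_self j (p ^ 2)
    rw [add_mul]; omega
  have h1 : p ^ (2 * (i / p ^ 2)) * (i / p ^ 2).factorial * (p ^ (2 * (j / p ^ 2)) * (j / p ^ 2).factorial)
    = p ^ (2 * (i / p ^ 2 + j / p ^ 2)) * ((i / p ^ 2).factorial * (j / p ^ 2).factorial) := by
    rw [mul_add, pow_add]; ring
  rw [h1]
  apply mul_dvd_mul
  · exact pow_dvd_pow _ (by omega)
  · exact (Nat.factorial_mul_factorial_dvd_factorial_add _ _).trans (Nat.factorial_dvd_factorial h)

lemma norm_nat_mul_le_of_dvd {K : Type*} [NormedField K] [IsUltrametricDist K] {a b : ℕ} (h : a ∣ b) (x : K)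
    (hx : ‖(a : K) * x‖ ≤ 1) : ‖(b : K) * x‖ ≤ 1 := by
  obtain ⟨c, rfl⟩ := h
  have : ((a * c : ℕ) : K) * x = c * (a * x) := by push_cast; ring
  rw [this, norm_mul]
  exact mul_le_one₀ (IsUltrametricDist.norm_natCast_le_one K c) (norm_nonneg _) hx

/-- integrality up to denominators -/
def GI (n : ℕ) (g : PowerSeries ℚ_[p]) : Prop := ∀ i < n, ‖(Dn p i : ℚ_[p]) * coeff i g‖ ≤ 1

lemma GI_mul {n : ℕ} {f g : PowerSeries ℚ_[p]} (hf : GI p n f) (hg : GI p n g) : GI p n (f * g) := by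
  intro i hi
  rw [coeff_mul, Finset.mul_sum]
  apply norm_sum_le' _ _ _ zero_le_one
  rintro ⟨a, b⟩ hab
  rw [Finset.HasAntidiagonal.mem_antidiagonal] at hab
  simp only at hab ⊢
  subst hab
  apply norm_nat_mul_le_of_dvd (Dn_mul_dvd p a b)
  have : ((Dn p a * Dn p b : ℕ) : ℚ_[p]) * (coeff a f * coeff b g) =
    (Dn p a * coeff a f) * (Dn p b * coeff b g) := by push_cast; ring
  rw [this, norm_mul]
  exact mul_le_one₀ (hf a (by omega)) (norm_nonneg _) (hg b (by omega))

lemma GI_one (n : ℕ) : GI p n 1 := by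
  intro i hi
  rw [coeff_one]
  split_ifs with h
  · rw [mul_one]; exact IsUltrametricDist.norm_natCast_le_one _ _
  · simp

lemma GI_ex (n k : ℕ) : GI p n (ex (p ^ (k + 2)) (pow_ne_zero _ (pne p)) (-((p : ℚ_[p]) ^ (k + 2))⁻¹)) := by
  intro i hi
  by_cases hd : p ^ (k + 2) ∣ i
  · obtain ⟨m, rfl⟩ := hd
    rw [coeff_ex_mul]
    have hq : p ^ (k + 2) * m / p ^ 2 = p ^ k * m := by
      rw [pow_add, mul_assoc, mul_comm (p ^ 2) m, ← mul_assoc, Nat.mul_div_cancel _ (pow_pos hpf.out.pos 2)]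
    apply norm_nat_mul_le_of_dvd (a := p ^ ((k + 2) * m) * m.factorial)
    · unfold Dn
      rw [hq]
      apply mul_dvd_mul
      · apply pow_dvd_pow
        have : k + 2 ≤ 2 * p ^ k := by
          have h2 : 2 ^ k ≤ p ^ k := Nat.pow_le_pow_left hpf.out.two_le k
          have h3 : k < 2 ^ k := Nat.lt_two_pow_self
          omega
        nlinarith
      · exact Nat.factorial_dvd_factorial (Nat.le_mul_of_pos_left _ (pow_pos hpf.out.pos k))
    · have hpk : (p : ℚ_[p]) ≠ 0 := by exact_mod_cast pne p
      have hm : ((m.factorial : ℕ) : ℚ_[p]) ≠ 0 := by exact_mod_cast Nat.factorial_ne_zero m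
      have : ((p ^ ((k + 2) * m) * m.factorial : ℕ) : ℚ_[p]) * ((-((p : ℚ_[p]) ^ (k + 2))⁻¹) ^ m / m.factorial)
         = (-1) ^ m := by
        push_cast
        rw [neg_pow, inv_pow, ← pow_mul]
        field_simp
      rw [this]
      simp
  · rw [coeff_ex_of_not_dvd _ _ _ _ hd]; simp

/-- The series `exp (t + t^p / p)`. -/
noncomputable def fser : PowerSeries ℚ_[p] :=
  ex 1 one_ne_zero 1 * ex p (pne p) (p : ℚ_[p])⁻¹

lemma fser_eq (K : ℕ) : fser p = EK p (pne p) ℚ_[p] (K + 1) *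
    ∏ j ∈ Finset.range K, ex (p ^ (j + 2)) (pow_ne_zero _ (pne p)) (-((p : ℚ_[p]) ^ (j + 2))⁻¹) := by
  unfold EK
  rw [Finset.prod_range_succ', Finset.prod_range_succ']
  have h : (∏ j ∈ Finset.range K, ex (p ^ (j + 1 + 1)) (pow_ne_zero _ (pne p)) ((p : ℚ_[p]) ^ (j + 1 + 1))⁻¹) *
     ∏ j ∈ Finset.range K, ex (p ^ (j + 2)) (pow_ne_zero _ (pne p)) (-((p : ℚ_[p]) ^ (j + 2))⁻¹) = 1 := by
    rw [← Finset.prod_mul_distrib]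
    apply Finset.prod_eq_one
    intro j _
    rw [ex_mul, add_neg_cancel, ex_zero]
  have h1 : ex (p ^ 0) (pow_ne_zero _ (pne p)) ((p : ℚ_[p]) ^ 0)⁻¹ = ex 1 one_ne_zero 1 := by
    apply ex_congr <;> simp
  have h2 : ex (p ^ (0 + 1)) (pow_ne_zero _ (pne p)) ((p : ℚ_[p]) ^ (0 + 1))⁻¹ = ex p (pne p) (p : ℚ_[p])⁻¹ := by
    apply ex_congr <;> simp
  rw [h1, h2]
  unfold fser
  linear_combination (-(ex p (pne p) (p : ℚ_[p])⁻¹ * ex 1 one_ne_zero 1)) * h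

lemma fser_bound (i : ℕ) : ‖(Dn p i : ℚ_[p]) * coeff i (fser p)‖ ≤ 1 := by
  rw [fser_eq p i]
  have hi : i < p ^ (i + 1 + 1) := (Nat.lt_pow_self hpf.out.one_lt).trans_le
    (Nat.pow_le_pow_right hpf.out.pos (by omega))
  have : GI p (p ^ (i + 1 + 1)) (EK p (pne p) ℚ_[p] (i + 1) *
    ∏ j ∈ Finset.range i, ex (p ^ (j + 2)) (pow_ne_zero _ (pne p)) (-((p : ℚ_[p]) ^ (j + 2))⁻¹)) := by
    apply GI_mul
    · intro l hl
      rw [norm_mul]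
      exact mul_le_one₀ (IsUltrametricDist.norm_natCast_le_one _ _) (norm_nonneg _) (EK_int p _ l hl)
    · apply Finset.prod_induction _ (GI p (p ^ (i + 1 + 1)))
      · intro a b ha hb; exact GI_mul p ha hb
      · exact GI_one p _
      · intro j _; exact GI_ex p _ j
  exact this i hi

lemma fser_coeff (i : ℕ) : coeff i (fser p) = ∑ k ∈ Finset.range (i + 1),
    if p * k ≤ i then 1 / ((p : ℚ_[p]) ^ k * (k.factorial * (i - p * k).factorial)) else 0 := by
  unfold fser
  rw [mul_comm, coeff_mul, Finset.Nat.sum_antidiagonal_eq_sum_range_succ_mk]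
  rw [← Finset.sum_filter]
  have hs : ∀ l, coeff l (ex 1 one_ne_zero (1 : ℚ_[p])) = 1 / (l.factorial : ℚ_[p]) := by
    intro l
    have := coeff_ex_mul 1 one_ne_zero (1 : ℚ_[p]) l
    simpa using this
  symm
  apply Finset.sum_bij_ne_zero (fun k _ _ => p * k)
  · intro k hk _
    simp only [Finset.mem_filter, Finset.mem_range] at hk ⊢
    omega
  · intro a _ _ b _ _ h
    exact Nat.eq_of_mul_eq_mul_left hpf.out.pos h
  · intro b hb hne
    simp only [Finset.mem_range] at hb
    have hd : p ∣ b := by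
      by_contra hd
      apply hne
      simp only
      rw [coeff_ex_of_not_dvd _ _ _ _ hd, zero_mul]
    obtain ⟨k, rfl⟩ := hd
    have hpk : (p : ℚ_[p]) ≠ 0 := by exact_mod_cast pne p
    have : k ≤ p * k := Nat.le_mul_of_pos_left _ hpf.out.pos
    refine ⟨k, ?_, ?_, rfl⟩
    · simp only [Finset.mem_filter, Finset.mem_range]; omega
    · have h1 : ((k.factorial : ℕ) : ℚ_[p]) ≠ 0 := by exact_mod_cast Nat.factorial_ne_zero _
      have h2 : (((i - p * k).factorial : ℕ) : ℚ_[p]) ≠ 0 := by exact_mod_cast Nat.factorial_ne_zero _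
      exact one_div_ne_zero (mul_ne_zero (pow_ne_zero _ hpk) (mul_ne_zero h1 h2))
  · intro k hk _
    simp only
    rw [coeff_ex_mul, hs, inv_pow]
    field_simp

end
end AHGp

open scoped BigOperators Classical

namespace AHGp
section
variable (p : ℕ) [hpf : Fact p.Prime] {K : Type*} [NormedField K] [IsUltrametricDist K]

lemma norm_p (ι : ℚ_[p] →+* K) (hι : ∀ x, ‖ι x‖ = ‖x‖) : ‖(p : K)‖ = (p : ℝ)⁻¹ := by
  have := hι (p : ℚ_[p])
  rw [map_natCast] at this
  rw [this, Padic.norm_p]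

lemma norm_nat (ι : ℚ_[p] →+* K) (hι : ∀ x, ‖ι x‖ = ‖x‖) (m : ℕ) : ‖(m : K)‖ = ‖(m : ℚ_[p])‖ := by
  have := hι (m : ℚ_[p])
  rwa [map_natCast] at this

lemma cast_ne (ι : ℚ_[p] →+* K) (hι : ∀ x, ‖ι x‖ = ‖x‖) (m : ℕ) (hm : m ≠ 0) : (m : K) ≠ 0 := by
  rw [← norm_pos_iff, norm_nat p ι hι, norm_pos_iff]
  exact_mod_cast hm

lemma pi_ne (ι : ℚ_[p] →+* K) (hι : ∀ x, ‖ι x‖ = ‖x‖) (π : K) (hπ : π ^ (p - 1) = -(p : K)) :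
    π ≠ 0 := by
  rintro rfl
  have h1 : p - 1 ≠ 0 := by have := hpf.out.two_le; omega
  rw [zero_pow h1] at hπ
  have := cast_ne p ι hι p hpf.out.ne_zero
  apply this
  rw [← neg_eq_zero, ← hπ]

lemma norm_pi (ι : ℚ_[p] →+* K) (hι : ∀ x, ‖ι x‖ = ‖x‖) (π : K) (hπ : π ^ (p - 1) = -(p : K)) :
    ‖π‖ ^ (p - 1) = (p : ℝ)⁻¹ := by
  rw [← norm_pow, hπ, norm_neg, norm_p p ι hι]

lemma dworkB_eq (ι : ℚ_[p] →+* K) (hι : ∀ x, ‖ι x‖ = ‖x‖) (π : K) (hπ : π ^ (p - 1) = -(p : K))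
    (i : ℕ) : AHG.dworkB p π i = π ^ i * ι (PowerSeries.coeff i (fser p)) := by
  rw [fser_coeff, map_sum, Finset.mul_sum]
  unfold AHG.dworkB
  apply Finset.sum_congr rfl
  intro k _
  split_ifs with h
  · have hp0 : (p : K) ≠ 0 := cast_ne p ι hι p hpf.out.ne_zero
    have h1 : ((k.factorial : ℕ) : K) ≠ 0 := cast_ne p ι hι _ (Nat.factorial_ne_zero _)
    have h2 : (((i - p * k).factorial : ℕ) : K) ≠ 0 := cast_ne p ι hι _ (Nat.factorial_ne_zero _)
    have hpi : π ^ i = π ^ (i - p * k + k) * (-(p : K)) ^ k := by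
      rw [← hπ, ← pow_mul, ← pow_add]
      congr 1
      have : (p - 1) * k = p * k - k := by rw [Nat.sub_mul, one_mul]
      have : k ≤ p * k := Nat.le_mul_of_pos_left _ hpf.out.pos
      omega
    rw [hpi, map_div₀, map_mul, map_mul, map_pow]
    simp only [map_natCast, map_one]
    rw [neg_pow (p : K) k]
    field_simp
  · simp

lemma dworkB_bound (ι : ℚ_[p] →+* K) (hι : ∀ x, ‖ι x‖ = ‖x‖) (π : K) (hπ : π ^ (p - 1) = -(p : K))
    (i : ℕ) : ‖(Dn p i : K) * AHG.dworkB p π i‖ ≤ ‖π‖ ^ i := by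
  rw [dworkB_eq p ι hι π hπ]
  have h : (Dn p i : K) * (π ^ i * ι (PowerSeries.coeff i (fser p))) =
    π ^ i * ι ((Dn p i : ℚ_[p]) * PowerSeries.coeff i (fser p)) := by
    rw [map_mul, map_natCast]; ring
  rw [h, norm_mul, hι, norm_pow]
  exact mul_le_of_le_one_right (by positivity) (fser_bound p i)

lemma dworkB_small (π : K) (i : ℕ) (hi : i < p) : AHG.dworkB p π i = π ^ i / (i.factorial : K) := by
  unfold AHG.dworkB
  rw [Finset.sum_eq_single 0]
  · simp
  · intro k _ hk
    rw [if_neg]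
    have : p ≤ p * k := Nat.le_mul_of_pos_right _ (Nat.pos_of_ne_zero hk)
    omega
  · simp

lemma Dn_prod_dvd {α : Type*} (s : Finset α) (ν : α → ℕ) :
    ∏ j ∈ s, Dn p (ν j) ∣ Dn p (∑ j ∈ s, ν j) := by
  induction s using Finset.induction_on with
  | empty => simp
  | insert a s ha ih =>
    rw [Finset.prod_insert ha, Finset.sum_insert ha]
    exact (mul_dvd_mul_left _ ih).trans (Dn_mul_dvd p _ _)

lemma norm_nat_mul_le_of_dvd' {a b : ℕ} (h : a ∣ b) (x : K) :
    ‖(b : K) * x‖ ≤ ‖(a : K) * x‖ := by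
  obtain ⟨c, rfl⟩ := h
  have : ((a * c : ℕ) : K) * x = c * (a * x) := by push_cast; ring
  rw [this, norm_mul]
  exact mul_le_of_le_one_left (norm_nonneg _) (IsUltrametricDist.norm_natCast_le_one K c)

lemma dworkB_prod_bound (ι : ℚ_[p] →+* K) (hι : ∀ x, ‖ι x‖ = ‖x‖) (π : K)
    (hπ : π ^ (p - 1) = -(p : K)) {N : ℕ} (k : ℕ) (ν : Fin N → ℕ) :
    ‖(Dn p (k + ∑ i, ν i) : K) * (AHG.dworkB p π k * ∏ i, AHG.dworkB p π (ν i))‖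
      ≤ ‖π‖ ^ (k + ∑ i, ν i) := by
  refine (norm_nat_mul_le_of_dvd' ((mul_dvd_mul_left _ (Dn_prod_dvd p Finset.univ ν)).trans
    (Dn_mul_dvd p _ _)) _).trans ?_
  push_cast
  rw [mul_mul_mul_comm, ← Finset.prod_mul_distrib, norm_mul, norm_prod, pow_add,
    ← Finset.prod_pow_eq_pow_sum]
  apply mul_le_mul (dworkB_bound p ι hι π hπ k) _ (Finset.prod_nonneg fun _ _ => norm_nonneg _)
    (by positivity)
  exact Finset.prod_le_prod (fun _ _ => norm_nonneg _) (fun i _ => dworkB_bound p ι hι π hπ _)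

lemma norm_Dn (ι : ℚ_[p] →+* K) (hι : ∀ x, ‖ι x‖ = ‖x‖) (m : ℕ) :
    ‖(Dn p m : K)‖ = ((p : ℝ)⁻¹) ^ (padicValNat p (Dn p m)) := by
  have hD : Dn p m ≠ 0 := mul_ne_zero (pow_ne_zero _ hpf.out.ne_zero) (Nat.factorial_ne_zero _)
  rw [norm_nat p ι hι]
  have := Padic.norm_eq_zpow_neg_valuation (p := p) (x := (Dn p m : ℚ_[p])) (by exact_mod_cast hD)
  rw [this, Padic.valuation_natCast]
  simp

lemma val_Dn (hp2 : p ≠ 2) (m : ℕ) (n0 : ℕ) (hn0 : 2 ≤ n0) (hm : m < p * n0) :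
    padicValNat p (Dn p m) + 2 ≤ n0 := by
  unfold Dn
  have hp3 : 3 ≤ p := by have := hpf.out.two_le; omega
  set q := m / p ^ 2 with hq
  rw [padicValNat.mul (pow_ne_zero _ hpf.out.ne_zero) (Nat.factorial_ne_zero _), padicValNat.prime_pow]
  rcases Nat.eq_zero_or_pos q with h0 | hpos
  · rw [h0]; simpa using hn0
  · have hv : padicValNat p q.factorial < q := by
      have h := sub_one_mul_padicValNat_factorial_lt_of_ne_zero p hpos.ne'
      have : 1 ≤ p - 1 := by omega
      nlinarith
    have h1 : q * p ^ 2 ≤ m := Nat.div_mul_le_self m (p ^ 2)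
    have h2 : q * p < n0 := by
      have : p * (q * p) < p * n0 := by nlinarith
      exact Nat.lt_of_mul_lt_mul_left this
    nlinarith

lemma key_estimate (hp2 : p ≠ 2) (ι : ℚ_[p] →+* K) (hι : ∀ x, ‖ι x‖ = ‖x‖) (π : K)
    (hπ : π ^ (p - 1) = -(p : K)) (ν0 ρ0 : ℤ) (m : ℕ) (hm : (m : ℤ) = p * ν0 - ρ0)
    (hν : 2 ≤ ν0) (hρ : 1 ≤ ρ0) (x : K) (hx : ‖(Dn p m : K) * x‖ ≤ ‖π‖ ^ m) :
    ‖π ^ (ρ0 - ν0) * x‖ ≤ ((p : ℝ)⁻¹) ^ 2 := by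
  obtain ⟨n0, rfl⟩ : ∃ n0 : ℕ, ν0 = n0 := ⟨ν0.toNat, by omega⟩
  have hpR : (0 : ℝ) < p := by exact_mod_cast hpf.out.pos
  have hp1 : (p : ℝ)⁻¹ ≤ 1 := inv_le_one_of_one_le₀ (by exact_mod_cast hpf.out.one_lt.le)
  have hv := val_Dn p hp2 m n0 (by omega) (by zify; omega)
  rw [norm_mul, norm_Dn p ι hι] at hx
  have hpi : ‖π‖ ≠ 0 := by rw [norm_ne_zero_iff]; exact pi_ne p ι hι π hπ
  have h1 : ‖π‖ ^ (ρ0 - (n0 : ℤ)) * ‖π‖ ^ m = ((p : ℝ)⁻¹) ^ n0 := by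
    rw [← norm_pi p ι hι π hπ, ← pow_mul, ← zpow_natCast, ← zpow_natCast, ← zpow_add₀ hpi, hm]
    congr 1
    push_cast [hpf.out.one_lt.le]
    ring
  rw [norm_mul, norm_zpow]
  set v := padicValNat p (Dn p m)
  have h2 : ((p : ℝ)⁻¹) ^ v * (‖π‖ ^ (ρ0 - (n0 : ℤ)) * ‖x‖) ≤ ((p : ℝ)⁻¹) ^ v * ((p : ℝ)⁻¹) ^ 2 := by
    calc _ = ‖π‖ ^ (ρ0 - (n0 : ℤ)) * (((p : ℝ)⁻¹) ^ v * ‖x‖) := by ring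
      _ ≤ ‖π‖ ^ (ρ0 - (n0 : ℤ)) * ‖π‖ ^ m := by gcongr
      _ = ((p : ℝ)⁻¹) ^ n0 := h1
      _ ≤ ((p : ℝ)⁻¹) ^ (v + 2) := pow_le_pow_of_le_one (by positivity) hp1 hv
      _ = _ := pow_add _ _ _
  exact le_of_mul_le_mul_left h2 (by positivity)

end
end AHGp

open scoped BigOperators Classical

namespace AHGp
section
variable {n N : ℕ} (a : Fin (N + 1) → Fin n → ℤ)

lemma hat_mem_cone (j : Fin (N + 1)) : (fun i => (AHG.hat (a j) i : ℝ)) ∈ AHG.cone a := by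
  refine ⟨Pi.single j 1, ?_, ?_⟩
  · intro i
    by_cases h : i = j
    · subst h; simp
    · simp [Pi.single_eq_of_ne h]
  · rw [Finset.sum_eq_single j]
    · simp
    · intro b _ hb; simp [Pi.single_eq_of_ne hb]
    · simp

lemma cone_nonneg (ℓ : (Fin (n + 1) → ℝ) →ₗ[ℝ] ℝ)
    (h : ∀ j, 0 ≤ ℓ (fun i => (AHG.hat (a j) i : ℝ))) : ∀ x ∈ AHG.cone a, 0 ≤ ℓ x := by
  rintro x ⟨t, ht, rfl⟩
  rw [map_sum]
  apply Finset.sum_nonneg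
  intro j _
  rw [map_smul, smul_eq_mul]
  exact mul_nonneg (ht j) (h j)

lemma Mint_pos (ν : Fin (n + 1) → ℤ) (hν : ν ∈ AHG.latticeMint a) : 1 ≤ ν 0 := by
  have hℓ := cone_nonneg a (LinearMap.proj 0) (by intro j; simp [AHG.hat])
  have h0 : (0 : ℝ) ≤ ν 0 := hℓ _ hν.1.1
  have h0' : 0 ≤ ν 0 := by exact_mod_cast h0
  rcases h0'.lt_or_eq with h | h
  · omega
  · exfalso
    have := hν.2 (LinearMap.proj 0) hℓ (by simp [← h]) _ (hat_mem_cone a 0)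
    simp [AHG.hat] at this

lemma Mint_eq (hΔ : AHG.uniqueInteriorPoint a) (ν : Fin (n + 1) → ℤ)
    (hν : ν ∈ AHG.latticeMint a) (h1 : ν 0 = 1) : ν = AHG.hat (a 0) := by
  have hν' : ν = AHG.hat (Fin.tail ν) := by
    unfold AHG.hat
    rw [← h1, Fin.cons_self_tail]
  suffices h : Fin.tail ν = a 0 by rw [hν', h]
  apply hΔ.2
  by_contra hnotin
  set D := convexHull ℝ (Set.range fun j : Fin N => fun i => (a j.succ i : ℝ)) with hD
  have hconv : Convex ℝ D := convex_convexHull _ _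
  obtain ⟨f, hf⟩ := geometric_hahn_banach_open_point hconv.interior isOpen_interior hnotin
  set v : Fin n → ℝ := fun i => (Fin.tail ν i : ℝ) with hv
  have hle : ∀ x ∈ D, f x ≤ f v := by
    intro x hx
    have hx' : x ∈ closure (interior D) := by
      rw [hconv.closure_interior_eq_closure_of_nonempty_interior ⟨_, hΔ.1⟩]
      exact subset_closure hx
    have hcl : IsClosed {x | f x ≤ f v} := isClosed_le f.continuous continuous_const
    exact (closure_minimal (fun y hy => (hf y hy).le) hcl) hx'
  let tl : (Fin (n + 1) → ℝ) →ₗ[ℝ] (Fin n → ℝ) := LinearMap.funLeft ℝ ℝ Fin.succ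
  let ℓ : (Fin (n + 1) → ℝ) →ₗ[ℝ] ℝ := f v • LinearMap.proj 0 - f.toLinearMap ∘ₗ tl
  have hℓ : ∀ w : Fin (n + 1) → ℝ, ℓ w = f v * w 0 - f (fun i => w i.succ) := by
    intro w
    rfl
  have hhat : ∀ j, ℓ (fun i => (AHG.hat (a j) i : ℝ)) = f v - f (fun i => (a j i : ℝ)) := by
    intro j
    rw [hℓ]
    simp [AHG.hat]
  have hcone := cone_nonneg a ℓ (by
    intro j
    rw [hhat, sub_nonneg]
    refine Fin.cases ?_ (fun j => ?_) j
    · exact (hf _ hΔ.1).le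
    · exact hle _ (subset_convexHull _ _ ⟨j, rfl⟩))
  have h0 : ℓ (fun i => (ν i : ℝ)) = 0 := by
    rw [hℓ, h1]
    simp [hv, Fin.tail]
  have := hν.2 ℓ hcone h0 _ (hat_mem_cone a 0)
  rw [hhat] at this
  have h2 := hf _ hΔ.1
  linarith

end
end AHGp

open scoped BigOperators Classical

namespace AHGp
open MvPowerSeries
section
variable {N : ℕ} {K : Type*} [NormedField K] [IsUltrametricDist K]

/-- all coefficients have norm at most `c` -/
def bd (f : MvPowerSeries (Fin N) K) (c : ℝ) : Prop := ∀ ν, ‖coeff ν f‖ ≤ c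

lemma bd_mono {f : MvPowerSeries (Fin N) K} {c d : ℝ} (h : bd f c) (hcd : c ≤ d) : bd f d :=
  fun ν => (h ν).trans hcd

lemma bd_nonneg {f : MvPowerSeries (Fin N) K} {c : ℝ} (h : bd f c) : 0 ≤ c :=
  (norm_nonneg _).trans (h 0)

lemma bd_zero {c : ℝ} (hc : 0 ≤ c) : bd (0 : MvPowerSeries (Fin N) K) c := by
  intro ν; simpa using hc

lemma bd_add {f g : MvPowerSeries (Fin N) K} {c : ℝ} (hf : bd f c) (hg : bd g c) : bd (f + g) c := by
  intro ν
  rw [map_add]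
  exact (IsUltrametricDist.norm_add_le_max _ _).trans (max_le (hf ν) (hg ν))

lemma bd_neg {f : MvPowerSeries (Fin N) K} {c : ℝ} (hf : bd f c) : bd (-f) c := by
  intro ν
  rw [map_neg, norm_neg]
  exact hf ν

lemma bd_sub {f g : MvPowerSeries (Fin N) K} {c : ℝ} (hf : bd f c) (hg : bd g c) : bd (f - g) c := by
  rw [sub_eq_add_neg]; exact bd_add hf (bd_neg hg)

lemma bd_mul {f g : MvPowerSeries (Fin N) K} {c d : ℝ} (hf : bd f c) (hg : bd g d) :
    bd (f * g) (c * d) := by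
  intro ν
  rw [coeff_mul]
  apply norm_sum_le' _ _ _ (mul_nonneg (bd_nonneg hf) (bd_nonneg hg))
  rintro x _
  rw [norm_mul]
  exact mul_le_mul (hf _) (hg _) (norm_nonneg _) (bd_nonneg hf)

lemma bd_smul {f : MvPowerSeries (Fin N) K} {c : ℝ} (x : K) (hf : bd f c) :
    bd (x • f) (‖x‖ * c) := by
  intro ν
  rw [coeff_smul, norm_mul]
  exact mul_le_mul_of_nonneg_left (hf ν) (norm_nonneg _)

lemma bd_one : bd (1 : MvPowerSeries (Fin N) K) 1 := by
  intro ν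
  rw [coeff_one]
  split_ifs <;> simp

lemma bd_pow {f : MvPowerSeries (Fin N) K} {c : ℝ} (hf : bd f c) (k : ℕ) : bd (f ^ k) (c ^ k) := by
  induction k with
  | zero => simpa using bd_one
  | succ k ih => rw [pow_succ, pow_succ]; exact bd_mul ih hf

lemma bd_pow_one {f : MvPowerSeries (Fin N) K} (hf : bd f 1) (k : ℕ) : bd (f ^ k) 1 := by
  simpa using bd_pow hf k

lemma bd_sum {α : Type*} (s : Finset α) (f : α → MvPowerSeries (Fin N) K) {c : ℝ} (hc : 0 ≤ c)
    (h : ∀ i ∈ s, bd (f i) c) : bd (∑ i ∈ s, f i) c := by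
  intro ν
  rw [map_sum]
  exact norm_sum_le' _ _ _ hc (fun i hi => h i hi ν)

lemma bd_poly (q : MvPolynomial (Fin N) K) : ∃ c : ℝ, 0 < c ∧ bd (q : MvPowerSeries (Fin N) K) c := by
  refine ⟨1 + ∑ ν ∈ q.support, ‖q.coeff ν‖, by positivity, ?_⟩
  intro ν
  rw [MvPolynomial.coeff_coe]
  by_cases h : ν ∈ q.support
  · have := Finset.single_le_sum (f := fun ν => ‖q.coeff ν‖) (fun _ _ => norm_nonneg _) h
    linarith
  · rw [MvPolynomial.notMem_support_iff.1 h, norm_zero]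
    positivity

lemma bd_intpoly (q : MvPolynomial (Fin N) ℤ) :
    bd ((MvPolynomial.map (Int.castRingHom K) q : MvPolynomial (Fin N) K) : MvPowerSeries (Fin N) K) 1 := by
  intro ν
  rw [MvPolynomial.coeff_coe, MvPolynomial.coeff_map]
  exact IsUltrametricDist.norm_intCast_le_one K _

lemma bd_inv {h : MvPowerSeries (Fin N) K} (hh : bd h 1) (h0 : ‖constantCoeff h‖ = 1) :
    bd h⁻¹ 1 := by
  have main : ∀ d : ℕ, ∀ ν : Fin N →₀ ℕ, ν.degree = d → ‖coeff ν h⁻¹‖ ≤ 1 := by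
    intro d
    induction d using Nat.strong_induction_on with
    | _ d ih =>
    intro ν hν
    rw [coeff_inv]
    split_ifs with hz
    · rw [norm_inv, h0, inv_one]
    · rw [norm_mul, norm_neg, norm_inv, h0, inv_one, one_mul]
      apply norm_sum_le' _ _ _ zero_le_one
      rintro ⟨x, y⟩ hxy
      split_ifs with hlt
      · rw [norm_mul]
        apply mul_le_one₀ (hh _) (norm_nonneg _)
        apply ih y.degree _ y rfl
        rw [← hν]
        have hxy' : x + y = ν := by simpa using hxy
        have hle : y.degree ≤ ν.degree := by
          rw [← hxy', map_add]; omega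
        rcases hle.lt_or_eq with h | h
        · exact h
        · exfalso
          rw [← hxy', map_add] at h
          have hx : x.degree = 0 := by omega
          rw [Finsupp.degree_eq_zero_iff] at hx
          rw [hx, zero_add] at hxy'
          exact hlt.ne hxy'
      · simp
  exact fun ν => main _ ν rfl

/-- A geometric type inverse -/
lemma const_one_add {f : MvPowerSeries (Fin N) K} {δ : ℝ} (hf : bd f δ) (hδ : δ < 1) :
    ‖constantCoeff (1 + f)‖ = 1 := by
  have h1 : ‖constantCoeff f‖ < 1 := (hf 0).trans_lt hδ
  rw [map_add, map_one]
  have := IsUltrametricDist.norm_add_eq_max_of_norm_ne_norm (x := (1 : K)) (y := constantCoeff f)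
    (by rw [norm_one]; exact h1.ne')
  rw [this, norm_one, max_eq_left h1.le]

lemma ne_of_norm_one {x : K} (h : ‖x‖ = 1) : x ≠ 0 := by
  rintro rfl; simp at h

section Cl
variable (Φ : MvPolynomial (Fin N) ℤ)

/-- `Φ` as a power series over `K` -/
noncomputable def PS (K : Type*) [NormedField K] (q : MvPolynomial (Fin N) ℤ) : MvPowerSeries (Fin N) K :=
  ((MvPolynomial.map (Int.castRingHom K) q : MvPolynomial (Fin N) K) : MvPowerSeries (Fin N) K)

/-- localised polynomials -/
def isQ (f : MvPowerSeries (Fin N) K) : Prop :=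
  ∃ (k : ℕ) (q : MvPolynomial (Fin N) K), f = (q : MvPowerSeries (Fin N) K) * ((PS K Φ)⁻¹) ^ k

/-- closure of the localised polynomials -/
def Cl (f : MvPowerSeries (Fin N) K) : Prop := ∀ ε : ℝ, 0 < ε → ∃ g, isQ Φ g ∧ bd (f - g) ε

variable {Φ}

lemma PS_const (hΦ : MvPolynomial.constantCoeff Φ = 1) : constantCoeff (PS K Φ) = 1 := by
  unfold PS
  rw [← coeff_zero_eq_constantCoeff_apply, MvPolynomial.coeff_coe, MvPolynomial.coeff_map,
    ← MvPolynomial.constantCoeff_eq, hΦ]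
  simp

lemma PS_mul_inv (hΦ : MvPolynomial.constantCoeff Φ = 1) : PS K Φ * (PS K Φ)⁻¹ = 1 :=
  MvPowerSeries.mul_inv_cancel _ (by rw [PS_const hΦ]; exact one_ne_zero)

lemma bd_PS (q : MvPolynomial (Fin N) ℤ) : bd (PS K q) 1 := bd_intpoly q

lemma bd_PS_inv (hΦ : MvPolynomial.constantCoeff Φ = 1) : bd ((PS K Φ)⁻¹) 1 :=
  bd_inv (bd_PS Φ) (by rw [PS_const hΦ, norm_one])

lemma isQ_poly (q : MvPolynomial (Fin N) K) : isQ Φ (q : MvPowerSeries (Fin N) K) :=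
  ⟨0, q, by simp⟩

lemma isQ_mul {f g : MvPowerSeries (Fin N) K} (hf : isQ Φ f) (hg : isQ Φ g) : isQ Φ (f * g) := by
  obtain ⟨k, q, rfl⟩ := hf
  obtain ⟨l, r, rfl⟩ := hg
  exact ⟨k + l, q * r, by push_cast; ring⟩

lemma isQ_add (hΦ : MvPolynomial.constantCoeff Φ = 1) {f g : MvPowerSeries (Fin N) K} (hf : isQ Φ f) (hg : isQ Φ g) : isQ Φ (f + g) := by
  obtain ⟨k, q, rfl⟩ := hf
  obtain ⟨l, r, rfl⟩ := hg
  refine ⟨k + l, q * (MvPolynomial.map (Int.castRingHom K) Φ) ^ l +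
    r * (MvPolynomial.map (Int.castRingHom K) Φ) ^ k, ?_⟩
  push_cast
  change _ = (↑q * PS K Φ ^ l + ↑r * PS K Φ ^ k) * _
  have h : ∀ m : ℕ, PS K Φ ^ m * (PS K Φ)⁻¹ ^ m = 1 := by
    intro m; rw [← mul_pow, PS_mul_inv hΦ, one_pow]
  have h1 := h k
  have h2 := h l
  rw [pow_add]
  linear_combination (-(↑q * (PS K Φ)⁻¹ ^ k)) * h2 - (↑r * (PS K Φ)⁻¹ ^ l) * h1

lemma Cl_of_isQ {f : MvPowerSeries (Fin N) K} (hf : isQ Φ f) : Cl Φ f := by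
  intro ε hε
  exact ⟨f, hf, by rw [sub_self]; exact bd_zero hε.le⟩

lemma Cl_poly (q : MvPolynomial (Fin N) K) : Cl Φ (q : MvPowerSeries (Fin N) K) :=
  Cl_of_isQ (isQ_poly q)

lemma Cl_C (x : K) : Cl Φ (C x : MvPowerSeries (Fin N) K) := by
  have := Cl_poly (Φ := Φ) (MvPolynomial.C x : MvPolynomial (Fin N) K)
  rwa [MvPolynomial.coe_C] at this

lemma Cl_one : Cl Φ (1 : MvPowerSeries (Fin N) K) := by
  have := Cl_poly (Φ := Φ) (1 : MvPolynomial (Fin N) K)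
  rwa [MvPolynomial.coe_one] at this

lemma Cl_zero : Cl Φ (0 : MvPowerSeries (Fin N) K) := by
  have := Cl_poly (Φ := Φ) (0 : MvPolynomial (Fin N) K)
  rwa [MvPolynomial.coe_zero] at this

lemma Cl_PS_inv : Cl Φ ((PS K Φ)⁻¹) :=
  Cl_of_isQ ⟨1, 1, by simp⟩

lemma Cl_closed {f : MvPowerSeries (Fin N) K}
    (h : ∀ ε : ℝ, 0 < ε → ∃ g, Cl Φ g ∧ bd (f - g) ε) : Cl Φ f := by
  intro ε hε
  obtain ⟨g, hg, hfg⟩ := h ε hε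
  obtain ⟨g', hg', hgg'⟩ := hg ε hε
  refine ⟨g', hg', ?_⟩
  have : f - g' = (f - g) + (g - g') := by ring
  rw [this]
  exact bd_add hfg hgg'

lemma isQ_bdd (hΦ : MvPolynomial.constantCoeff Φ = 1) {f : MvPowerSeries (Fin N) K} (hf : isQ Φ f) : ∃ c : ℝ, 1 ≤ c ∧ bd f c := by
  obtain ⟨k, q, rfl⟩ := hf
  obtain ⟨c, hc, hq⟩ := bd_poly q
  refine ⟨max c 1, le_max_right _ _, ?_⟩
  have := bd_mul hq (bd_pow_one (bd_PS_inv hΦ) k)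
  exact bd_mono this (by rw [mul_one]; exact le_max_left _ _)

lemma Cl_bdd (hΦ : MvPolynomial.constantCoeff Φ = 1) {f : MvPowerSeries (Fin N) K} (hf : Cl Φ f) : ∃ c : ℝ, 1 ≤ c ∧ bd f c := by
  obtain ⟨g, hg, hfg⟩ := hf 1 one_pos
  obtain ⟨c, hc, hgc⟩ := isQ_bdd hΦ hg
  refine ⟨c, hc, ?_⟩
  have : f = (f - g) + g := by ring
  rw [this]
  exact bd_add (bd_mono hfg hc) hgc

lemma Cl_add (hΦ : MvPolynomial.constantCoeff Φ = 1) {f g : MvPowerSeries (Fin N) K} (hf : Cl Φ f) (hg : Cl Φ g) : Cl Φ (f + g) := by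
  intro ε hε
  obtain ⟨f', hf', h1⟩ := hf ε hε
  obtain ⟨g', hg', h2⟩ := hg ε hε
  refine ⟨f' + g', isQ_add hΦ hf' hg', ?_⟩
  rw [add_sub_add_comm]
  exact bd_add h1 h2

lemma Cl_mul (hΦ : MvPolynomial.constantCoeff Φ = 1) {f g : MvPowerSeries (Fin N) K} (hf : Cl Φ f) (hg : Cl Φ g) : Cl Φ (f * g) := by
  intro ε hε
  obtain ⟨c, hc, hfc⟩ := Cl_bdd hΦ hf
  obtain ⟨d, hd, hgd⟩ := Cl_bdd hΦ hg
  have hcd : 0 < max c d := lt_max_of_lt_left (by linarith)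
  set ε' := min 1 (ε / max c d) with hε'
  have hε'0 : 0 < ε' := lt_min one_pos (by positivity)
  have hε'1 : ε' * max c d ≤ ε := by
    calc _ ≤ ε / max c d * max c d := by gcongr; exact min_le_right _ _
      _ = ε := by field_simp
  obtain ⟨f', hf', h1⟩ := hf ε' hε'0
  obtain ⟨g', hg', h2⟩ := hg ε' hε'0
  refine ⟨f' * g', isQ_mul hf' hg', ?_⟩
  have hg'd : bd g' d := by
    have : g' = g - (g - g') := by ring
    rw [this]
    exact bd_sub hgd (bd_mono h2 ((min_le_left _ _).trans hd))
  have : f * g - f' * g' = f * (g - g') + (f - f') * g' := by ring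
  rw [this]
  apply bd_add
  · refine bd_mono (bd_mul hfc h2) (le_trans ?_ hε'1)
    rw [mul_comm]
    gcongr
    exact le_max_left _ _
  · refine bd_mono (bd_mul h1 hg'd) (le_trans ?_ hε'1)
    gcongr
    exact le_max_right _ _

lemma Cl_smul (hΦ : MvPolynomial.constantCoeff Φ = 1) {f : MvPowerSeries (Fin N) K} (x : K) (hf : Cl Φ f) : Cl Φ (x • f) := by
  rw [smul_eq_C_mul]
  exact Cl_mul hΦ (Cl_C x) hf

lemma Cl_neg (hΦ : MvPolynomial.constantCoeff Φ = 1) {f : MvPowerSeries (Fin N) K} (hf : Cl Φ f) : Cl Φ (-f) := by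
  have := Cl_smul hΦ (-1) hf
  simpa using this

lemma Cl_sub (hΦ : MvPolynomial.constantCoeff Φ = 1) {f g : MvPowerSeries (Fin N) K} (hf : Cl Φ f) (hg : Cl Φ g) : Cl Φ (f - g) := by
  rw [sub_eq_add_neg]; exact Cl_add hΦ hf (Cl_neg hΦ hg)

lemma Cl_pow (hΦ : MvPolynomial.constantCoeff Φ = 1) {f : MvPowerSeries (Fin N) K} (hf : Cl Φ f) (k : ℕ) : Cl Φ (f ^ k) := by
  induction k with
  | zero => simpa using Cl_one
  | succ k ih => rw [pow_succ]; exact Cl_mul hΦ ih hf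

lemma Cl_sum (hΦ : MvPolynomial.constantCoeff Φ = 1) {α : Type*} (s : Finset α) (f : α → MvPowerSeries (Fin N) K)
    (h : ∀ i ∈ s, Cl Φ (f i)) : Cl Φ (∑ i ∈ s, f i) := by
  induction s using Finset.induction_on with
  | empty => simpa using Cl_zero
  | insert a s ha ih =>
    rw [Finset.sum_insert ha]
    exact Cl_add hΦ (h a (by simp)) (ih (fun i hi => h i (by simp [hi])))

lemma Cl_geo (hΦ : MvPolynomial.constantCoeff Φ = 1) {f : MvPowerSeries (Fin N) K} (hf : Cl Φ f) {δ : ℝ} (hδ : bd f δ) (hδ1 : δ < 1) :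
    Cl Φ (1 + f)⁻¹ := by
  have hc := const_one_add hδ hδ1
  have hmul : (1 + f) * (1 + f)⁻¹ = 1 := MvPowerSeries.mul_inv_cancel _ (ne_of_norm_one hc)
  have hb1 : bd (1 + f) 1 := bd_add bd_one (bd_mono hδ hδ1.le)
  have hb : bd (1 + f)⁻¹ 1 := bd_inv hb1 hc
  apply Cl_closed
  intro ε hε
  obtain ⟨m, hm⟩ := exists_pow_lt_of_lt_one hε hδ1
  refine ⟨∑ j ∈ Finset.range m, (-f) ^ j, Cl_sum hΦ _ _ (fun j _ => Cl_pow hΦ (Cl_neg hΦ hf) j), ?_⟩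
  have hgeo := mul_neg_geom_sum (-f) m
  have : (1 + f)⁻¹ - ∑ j ∈ Finset.range m, (-f) ^ j = (1 + f)⁻¹ * (-f) ^ m := by
    linear_combination (∑ j ∈ Finset.range m, (-f) ^ j) * hmul - (1 + f)⁻¹ * hgeo
  rw [this]
  exact bd_mono (bd_mul hb (bd_pow (bd_neg hδ) m)) (by rw [one_mul]; exact hm.le)

end Cl
end
end AHGp

open scoped BigOperators Classical
namespace AHGp
open MvPowerSeries

section
variable {N : ℕ} {K : Type*} [NormedField K] [IsUltrametricDist K]
variable (p : ℕ) [Fact p.Prime]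

lemma frob_eq (f : MvPowerSeries (Fin N) K) : AHG.frobR p f = MvPowerSeries.expand p (pne p) f := by
  ext ν
  change AHG.frobR p f ν = _
  unfold AHG.frobR
  by_cases h : ∃ ν' : Fin N →₀ ℕ, p • ν' = ν
  · rw [dif_pos h]
    conv_rhs => rw [← h.choose_spec]
    rw [coeff_expand_smul]
    rfl
  · rw [dif_neg h]
    have : ∃ i, ¬ p ∣ ν i := by
      by_contra hc
      push Not at hc
      choose m hm using hc
      apply h
      refine ⟨Finsupp.equivFunOnFinite.symm m, ?_⟩
      ext i
      simp [hm i]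
    obtain ⟨i, hi⟩ := this
    rw [coeff_expand_of_not_dvd p (pne p) f hi]

lemma frob_mul (f g : MvPowerSeries (Fin N) K) :
    AHG.frobR p (f * g) = AHG.frobR p f * AHG.frobR p g := by
  simp only [frob_eq, map_mul]

lemma frob_one : AHG.frobR p (1 : MvPowerSeries (Fin N) K) = 1 := by
  simp only [frob_eq, map_one]

lemma frob_sub (f g : MvPowerSeries (Fin N) K) :
    AHG.frobR p (f - g) = AHG.frobR p f - AHG.frobR p g := by
  simp only [frob_eq, map_sub]

lemma frob_pow (f : MvPowerSeries (Fin N) K) (k : ℕ) :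
    AHG.frobR p (f ^ k) = AHG.frobR p f ^ k := by
  simp only [frob_eq, map_pow]

lemma bd_frob {f : MvPowerSeries (Fin N) K} {c : ℝ} (h : bd f c) : bd (AHG.frobR p f) c := by
  intro ν
  change ‖AHG.frobR p f ν‖ ≤ c
  unfold AHG.frobR
  split_ifs with h'
  · exact h _
  · rw [norm_zero]; exact bd_nonneg h

lemma frob_poly (q : MvPolynomial (Fin N) K) :
    AHG.frobR p (q : MvPowerSeries (Fin N) K) = (MvPolynomial.expand p q : MvPolynomial (Fin N) K) := by
  rw [frob_eq, expand_eq_expand]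

lemma PS_mul (q r : MvPolynomial (Fin N) ℤ) : PS K (q * r) = PS K q * PS K r := by
  simp [PS]
lemma PS_add (q r : MvPolynomial (Fin N) ℤ) : PS K (q + r) = PS K q + PS K r := by
  simp [PS]
lemma PS_pow (q : MvPolynomial (Fin N) ℤ) (k : ℕ) : PS K (q ^ k) = PS K q ^ k := by
  simp [PS]
lemma PS_natCast (m : ℕ) : PS K (MvPolynomial.C (m : ℤ)) = C (m : K) (σ := Fin N) := by
  rw [PS, MvPolynomial.map_C, MvPolynomial.coe_C]
  simp

lemma frob_PS (q : MvPolynomial (Fin N) ℤ) : AHG.frobR p (PS K q) = PS K (MvPolynomial.expand p q) := by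
  rw [PS, frob_poly, PS, MvPolynomial.map_expand]

lemma expand_int (q : MvPolynomial (Fin N) ℤ) :
    ∃ h, MvPolynomial.expand p q = q ^ p + MvPolynomial.C (p : ℤ) * h := by
  have : MvPolynomial.C (p : ℤ) ∣ MvPolynomial.expand p q - q ^ p := by
    rw [MvPolynomial.C_dvd_iff_zmod, map_sub, sub_eq_zero, MvPolynomial.map_expand, map_pow,
      MvPolynomial.expand_zmod]
  obtain ⟨h, hh⟩ := this
  exact ⟨h, by rw [← hh]; ring⟩

lemma bd_C (x : K) : bd (C x : MvPowerSeries (Fin N) K) ‖x‖ := by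
  have := bd_smul x (bd_one (N := N) (K := K))
  rw [smul_eq_C_mul, mul_one, mul_one] at this
  exact this

lemma p_inv_lt : ((p : ℝ))⁻¹ < 1 := by
  have := (Fact.out : p.Prime).one_lt
  exact inv_lt_one_of_one_lt₀ (by exact_mod_cast this)

lemma Cl_frob (ι : ℚ_[p] →+* K) (hι : ∀ x, ‖ι x‖ = ‖x‖)
    {Φ : MvPolynomial (Fin N) ℤ} (hΦ : MvPolynomial.constantCoeff Φ = 1)
    {f : MvPowerSeries (Fin N) K} (hf : Cl Φ f) : Cl Φ (AHG.frobR p f) := by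
  obtain ⟨h, hh⟩ := expand_int p Φ
  have hinv : Cl Φ (AHG.frobR p ((PS K Φ)⁻¹)) := by
    set Ψ := (PS K Φ)⁻¹ with hΨ
    have h1 : PS K Φ * Ψ = 1 := PS_mul_inv hΦ
    have h2 : AHG.frobR p (PS K Φ) * AHG.frobR p Ψ = 1 := by
      rw [← frob_mul, h1, frob_one]
    rw [frob_PS, hh, PS_add, PS_mul, PS_pow, PS_natCast] at h2
    set e : MvPowerSeries (Fin N) K := C (p : K) * PS K h * Ψ ^ p with he
    have hbe : bd e ((p:ℝ)⁻¹) := by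
      have := bd_mul (bd_mul (bd_C (N := N) (p : K)) (bd_PS h)) (bd_pow_one (bd_PS_inv hΦ) p)
      rw [norm_p p ι hι, mul_one, mul_one] at this
      exact this
    have hCe : Cl Φ e := Cl_mul hΦ (Cl_mul hΦ (Cl_C _) (Cl_poly _)) (Cl_pow hΦ Cl_PS_inv p)
    have hgeo := Cl_geo hΦ hCe hbe (p_inv_lt p)
    have hc := const_one_add hbe (p_inv_lt p)
    have hmul : (1 + e) * (1 + e)⁻¹ = 1 := MvPowerSeries.mul_inv_cancel _ (ne_of_norm_one hc)
    have h3 : PS K Φ ^ p * Ψ ^ p = 1 := by rw [← mul_pow, h1, one_pow]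
    have : AHG.frobR p Ψ = Ψ ^ p * (1 + e)⁻¹ := by
      have h4 : (PS K Φ ^ p + C (p : K) * PS K h) * (Ψ ^ p * (1 + e)⁻¹) = 1 := by
        generalize (1 + e)⁻¹ = v at hmul ⊢
        rw [he] at hmul
        linear_combination v * h3 + hmul
      calc AHG.frobR p Ψ = AHG.frobR p Ψ * ((PS K Φ ^ p + C (p : K) * PS K h) * (Ψ ^ p * (1 + e)⁻¹)) := by
            rw [h4, mul_one]
        _ = ((PS K Φ ^ p + C (p : K) * PS K h) * AHG.frobR p Ψ) * (Ψ ^ p * (1 + e)⁻¹) := by ring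
        _ = _ := by rw [h2, one_mul]
    rw [this]
    exact Cl_mul hΦ (Cl_pow hΦ Cl_PS_inv p) hgeo
  apply Cl_closed
  intro ε hε
  obtain ⟨g, ⟨k, q, rfl⟩, hg⟩ := hf ε hε
  have hg' := bd_frob p hg
  rw [frob_sub] at hg'
  refine ⟨_, ?_, hg'⟩
  rw [frob_mul, frob_pow, frob_poly]
  exact Cl_mul hΦ (Cl_poly _) (Cl_pow hΦ hinv k)

end
end AHGp

open scoped BigOperators Classical
namespace AHGp
open MvPowerSeries

section
variable {N : ℕ} {K : Type*} [NormedField K] [IsUltrametricDist K]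

/-- weighted coefficient -/
noncomputable def wt (f : MvPowerSeries (Fin N) K) (r : ℝ) (ν : Fin N →₀ ℕ) : ℝ :=
  ‖coeff ν f‖ * r ^ ν.degree

lemma exists_lead {f : MvPowerSeries (Fin N) K} {c : ℝ} (hf : bd f c) (h0 : f ≠ 0) {r : ℝ}
    (hr : 0 < r) (hr1 : r < 1) :
    ∃ α, 0 < wt f r α ∧ (∀ ν, wt f r ν ≤ wt f r α) ∧
      ∀ ν, toLex ν < toLex α → wt f r ν < wt f r α := by
  obtain ⟨ν0, hν0⟩ : ∃ ν, coeff ν f ≠ 0 := by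
    by_contra hc
    push Not at hc
    exact h0 (MvPowerSeries.ext (by simpa using hc))
  have hpos : 0 < wt f r ν0 := mul_pos (norm_pos_iff.2 hν0) (pow_pos hr _)
  set s : Set (Fin N →₀ ℕ) := {ν | wt f r ν0 ≤ wt f r ν} with hs
  have hc0 : 0 ≤ c := bd_nonneg hf
  have hfin : s.Finite := by
    obtain ⟨m, hm⟩ := exists_pow_lt_of_lt_one (show 0 < wt f r ν0 / (c + 1) by positivity) hr1
    apply (Finsupp.finite_of_degree_le (σ := Fin N) m).subset
    intro ν hν
    by_contra hd
    simp only [Set.mem_setOf_eq, not_le] at hd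
    have h1 : wt f r ν ≤ (c + 1) * r ^ m := by
      apply mul_le_mul ((hf ν).trans (by linarith)) _ (by positivity) (by positivity)
      exact pow_le_pow_of_le_one hr.le hr1.le hd.le
    rw [lt_div_iff₀ (by positivity)] at hm
    have h2 : wt f r ν0 ≤ wt f r ν := hν
    linarith
  obtain ⟨α1, hα1, hmax⟩ := Set.exists_max_image s (wt f r) hfin ⟨ν0, le_refl (wt f r ν0)⟩
  have hmax' : ∀ ν, wt f r ν ≤ wt f r α1 := by
    intro ν
    by_cases hν : ν ∈ s
    · exact hmax ν hν
    · have h2 : wt f r ν0 ≤ wt f r α1 := hα1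
      have : ¬ (wt f r ν0 ≤ wt f r ν) := hν
      linarith
  obtain ⟨α, hα, hmin⟩ := Set.exists_min_image {ν | ν ∈ s ∧ wt f r ν = wt f r α1} toLex
    (hfin.subset (fun ν h => h.1)) ⟨α1, hα1, rfl⟩
  refine ⟨α, ?_, ?_, ?_⟩
  · have h2 : wt f r ν0 ≤ wt f r α := hα.1
    linarith
  · intro ν; rw [hα.2]; exact hmax' ν
  · intro ν hν
    rw [hα.2]
    apply lt_of_le_of_ne (hmax' ν)
    intro he
    have : ν ∈ s := by
      change wt f r ν0 ≤ wt f r ν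
      rw [he]; exact hα1
    exact absurd (hmin ν ⟨this, he⟩) (not_le.2 hν)

lemma bd_of_inv {f g : MvPowerSeries (Fin N) K} {c d : ℝ} (hf : bd f c) (hg : bd g d)
    (hfg : f * g = 1) : bd f ‖constantCoeff f‖ := by
  have hf0 : f ≠ 0 := by rintro rfl; simp at hfg
  have hg0 : g ≠ 0 := by rintro rfl; simp at hfg
  have key : ∀ r : ℝ, 0 < r → r < 1 → ∀ ν, ‖coeff ν f‖ * r ^ ν.degree ≤ ‖constantCoeff f‖ := by
    intro r hr hr1 ν
    obtain ⟨α, hα, hαm, hαl⟩ := exists_lead hf hf0 hr hr1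
    obtain ⟨β, hβ, hβm, hβl⟩ := exists_lead hg hg0 hr hr1
    have hne : coeff (α + β) (f * g) ≠ 0 := by
      rw [coeff_mul]
      have hmem : (α, β) ∈ Finset.HasAntidiagonal.antidiagonal (α + β) := by simp
      rw [← Finset.add_sum_erase _ _ hmem]
      intro h0
      have h1 : ‖coeff α f * coeff β g‖ =
          ‖∑ x ∈ (Finset.HasAntidiagonal.antidiagonal (α + β)).erase (α, β), coeff x.1 f * coeff x.2 g‖ := by
        rw [eq_neg_of_add_eq_zero_left h0, norm_neg]
      have hpos : 0 < ‖coeff α f * coeff β g‖ := by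
        rw [norm_mul]
        exact mul_pos (pos_of_mul_pos_left hα (pow_nonneg hr.le _))
          (pos_of_mul_pos_left hβ (pow_nonneg hr.le _))
      obtain ⟨x, hx, hle⟩ := IsUltrametricDist.exists_norm_finsetSum_le
        ((Finset.HasAntidiagonal.antidiagonal (α + β)).erase (α, β)) (fun x => coeff x.1 f * coeff x.2 g)
      rw [← h1] at hle
      have hne : ((Finset.HasAntidiagonal.antidiagonal (α + β)).erase (α, β)).Nonempty := by
        by_contra hc
        rw [Finset.not_nonempty_iff_eq_empty] at hc
        rw [hc, Finset.sum_empty, norm_zero] at h1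
        linarith
      have hx := hx hne
      rw [Finset.mem_erase, Finset.HasAntidiagonal.mem_antidiagonal] at hx
      obtain ⟨hxne, hxs⟩ := hx
      have hdeg : x.1.degree + x.2.degree = α.degree + β.degree := by
        rw [← map_add, ← map_add, hxs]
      have hlt : wt f r x.1 * wt g r x.2 < wt f r α * wt g r β := by
        rcases lt_trichotomy (toLex x.1) (toLex α) with h | h | h
        · exact mul_lt_mul_of_lt_of_le_of_nonneg_of_pos (hαl _ h) (hβm _) (by unfold wt; positivity) hβ
        · exfalso
          have h1 : x.1 = α := toLex.injective h
          apply hxne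
          rw [h1] at hxs
          have h2 := add_left_cancel hxs
          exact Prod.ext h1 h2
        · have h2 : toLex x.2 < toLex β := by
            by_contra hc
            have h3 : toLex α + toLex β < toLex x.1 + toLex x.2 :=
              add_lt_add_of_lt_of_le h (not_lt.1 hc)
            rw [← toLex_add, ← toLex_add, hxs] at h3
            exact lt_irrefl _ h3
          exact mul_lt_mul_of_le_of_lt_of_nonneg_of_pos (hαm _) (hβl _ h2) (by unfold wt; positivity) hα
      have e1 : wt f r x.1 * wt g r x.2 = ‖coeff x.1 f * coeff x.2 g‖ * r ^ (α.degree + β.degree) := by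
        rw [← hdeg, norm_mul, pow_add]; unfold wt; ring
      have e2 : wt f r α * wt g r β = ‖coeff α f * coeff β g‖ * r ^ (α.degree + β.degree) := by
        rw [norm_mul, pow_add]; unfold wt; ring
      rw [e1, e2] at hlt
      have := lt_of_mul_lt_mul_right hlt (by positivity)
      linarith
    have hα0 : α = 0 := by
      rw [hfg, coeff_one] at hne
      have : α + β = 0 := by
        by_contra hc
        exact hne (if_neg hc)
      exact (add_eq_zero.1 this).1
    have := hαm ν
    rw [hα0] at this
    simpa [wt] using this
  intro ν
  have ht : Filter.Tendsto (fun r : ℝ => ‖coeff ν f‖ * r ^ ν.degree) (nhdsWithin 1 (Set.Ioo 0 1))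
      (nhds (‖coeff ν f‖ * 1 ^ ν.degree)) := by
    apply Filter.Tendsto.mono_left _ nhdsWithin_le_nhds
    exact (Continuous.tendsto (by fun_prop) 1)
  rw [one_pow, mul_one] at ht
  have : (nhdsWithin (1:ℝ) (Set.Ioo 0 1)).NeBot := right_nhdsWithin_Ioo_neBot one_pos
  apply le_of_tendsto ht
  filter_upwards [self_mem_nhdsWithin] with r hr
  exact key r hr.1 hr.2 ν

end
end AHGp

open scoped BigOperators Classical
namespace AHGp
open MvPowerSeries

section
variable {N : ℕ} {K : Type*} [NormedField K] [IsUltrametricDist K]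

/-- monomial at a point -/
def mon (y : Fin N → K) (ν : Fin N →₀ ℕ) : K := ∏ i, y i ^ ν i

lemma mon_add (y : Fin N → K) (ν μ : Fin N →₀ ℕ) : mon y (ν + μ) = mon y ν * mon y μ := by
  simp [mon, pow_add, Finset.prod_mul_distrib]

lemma mon_le (y : Fin N → K) {r : ℝ} (h : ∀ i, ‖y i‖ ≤ r) (ν : Fin N →₀ ℕ) :
    ‖mon y ν‖ ≤ r ^ ν.degree := by
  rw [mon, norm_prod, Finsupp.degree_eq_sum, ← Finset.prod_pow_eq_pow_sum]
  apply Finset.prod_le_prod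
  · intros; positivity
  · intro i _
    rw [norm_pow]
    exact pow_le_pow_left₀ (norm_nonneg _) (h i) _

lemma mon_le_one (y : Fin N → K) (h : ∀ i, ‖y i‖ ≤ 1) (ν : Fin N →₀ ℕ) : ‖mon y ν‖ ≤ 1 := by
  simpa using mon_le y h ν

lemma exists_r (y : Fin N → K) (h : ∀ i, ‖y i‖ < 1) : ∃ r : ℝ, 0 ≤ r ∧ r < 1 ∧ ∀ i, ‖y i‖ ≤ r := by
  refine ⟨(Finset.univ.sup (fun i => ‖y i‖₊) : NNReal), NNReal.coe_nonneg _, ?_, ?_⟩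
  · have : Finset.univ.sup (fun i => ‖y i‖₊) < 1 := by
      rw [Finset.sup_lt_iff (by simp)]
      intro i _
      exact_mod_cast h i
    exact_mod_cast this
  · intro i
    have := Finset.le_sup (f := fun i => ‖y i‖₊) (Finset.mem_univ i)
    exact_mod_cast this

lemma eval_mon (y : Fin N → K) (q : MvPolynomial (Fin N) K) :
    MvPolynomial.eval y q = ∑ ν ∈ q.support, q.coeff ν * mon y ν := MvPolynomial.eval_eq' _ _

lemma eval_le (y : Fin N → K) (h : ∀ i, ‖y i‖ ≤ 1) (q : MvPolynomial (Fin N) K) {c : ℝ}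
    (hq : bd (q : MvPowerSeries (Fin N) K) c) : ‖MvPolynomial.eval y q‖ ≤ c := by
  rw [eval_mon]
  apply norm_sum_le' _ _ _ (bd_nonneg hq)
  intro ν _
  have := hq ν
  rw [MvPolynomial.coeff_coe] at this
  rw [norm_mul]
  calc _ ≤ c * 1 := mul_le_mul this (mon_le_one y h ν) (norm_nonneg _) (bd_nonneg hq)
    _ = c := mul_one c

variable [CompleteSpace K]

lemma summ (y : Fin N → K) (h : ∀ i, ‖y i‖ < 1) {f : MvPowerSeries (Fin N) K} {c : ℝ} (hf : bd f c) :
    Summable (fun ν => coeff ν f * mon y ν) := by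
  obtain ⟨r, hr0, hr1, hr⟩ := exists_r y h
  apply NonarchimedeanAddGroup.summable_of_tendsto_cofinite_zero
  rw [Metric.tendsto_nhds]
  intro ε hε
  have hc := bd_nonneg hf
  obtain ⟨m, hm⟩ := exists_pow_lt_of_lt_one (show 0 < ε / (c + 1) by positivity) hr1
  rw [Filter.eventually_cofinite]
  apply (Finsupp.finite_of_degree_le (σ := Fin N) m).subset
  intro ν hν
  by_contra hd
  simp only [Set.mem_setOf_eq, not_le] at hd
  apply hν
  rw [dist_zero_right, norm_mul]
  rw [lt_div_iff₀ (by positivity)] at hm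
  calc _ ≤ (c + 1) * r ^ m := by
        apply mul_le_mul ((hf ν).trans (by linarith)) _ (by positivity) (by positivity)
        exact (mon_le y hr ν).trans (pow_le_pow_of_le_one hr0 hr1.le hd.le)
    _ < ε := by linarith

/-- evaluation -/
noncomputable def ev (y : Fin N → K) (f : MvPowerSeries (Fin N) K) : K := ∑' ν, coeff ν f * mon y ν

lemma ev_le (y : Fin N → K) (h : ∀ i, ‖y i‖ < 1) {f : MvPowerSeries (Fin N) K} {c : ℝ} (hf : bd f c) :
    ‖ev y f‖ ≤ c := by
  apply le_of_tendsto ((summ y h hf).hasSum.norm)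
  refine Filter.Eventually.of_forall (fun s => ?_)
  apply norm_sum_le' _ _ _ (bd_nonneg hf)
  intro ν _
  rw [norm_mul]
  calc _ ≤ c * 1 := mul_le_mul (hf ν) (mon_le_one y (fun i => (h i).le) ν) (norm_nonneg _) (bd_nonneg hf)
    _ = c := mul_one c

lemma ev_mul (y : Fin N → K) (h : ∀ i, ‖y i‖ < 1) {f g : MvPowerSeries (Fin N) K} {c d : ℝ}
    (hf : bd f c) (hg : bd g d) : ev y (f * g) = ev y f * ev y g := by
  unfold ev
  have s1 := summ y h hf
  have s2 := summ y h hg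
  have : NonarchimedeanRing K :=
    { is_nonarchimedean := NonarchimedeanAddGroup.is_nonarchimedean }
  have s3 := Summable.mul_of_nonarchimedean s1 s2
  have s4 := Summable.tsum_mul_tsum_eq_tsum_sum_antidiagonal s1 s2 s3
  rw [s4]
  congr 1
  ext ν
  rw [coeff_mul, Finset.sum_mul]
  apply Finset.sum_congr rfl
  intro x hx
  rw [Finset.HasAntidiagonal.mem_antidiagonal] at hx
  rw [← hx, mon_add]
  ring

lemma ev_sub (y : Fin N → K) (h : ∀ i, ‖y i‖ < 1) {f g : MvPowerSeries (Fin N) K} {c d : ℝ}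
    (hf : bd f c) (hg : bd g d) : ev y (f - g) = ev y f - ev y g := by
  unfold ev
  rw [← Summable.tsum_sub (summ y h hf) (summ y h hg)]
  congr 1
  ext ν
  rw [map_sub, sub_mul]

lemma ev_poly (y : Fin N → K) (q : MvPolynomial (Fin N) K) :
    ev y (q : MvPowerSeries (Fin N) K) = MvPolynomial.eval y q := by
  unfold ev
  rw [eval_mon, tsum_eq_sum (s := q.support)]
  · simp
  · intro ν hν
    rw [MvPolynomial.coeff_coe, MvPolynomial.notMem_support_iff.1 hν, zero_mul]

end

section
variable {n N : ℕ} (p : ℕ) (a : Fin (N + 1) → Fin n → ℤ)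

/-- the integral polynomial `Φ_1` -/
noncomputable def PhiZ : MvPolynomial (Fin N) ℤ :=
  ∑ l ∈ (Fintype.piFinset fun _ : Fin N => Finset.range p).filter
      (fun l => l ∈ AHG.LplusSet a ∧ ∑ i : Fin N, l i ≤ p - 1),
    MvPolynomial.monomial (Finsupp.equivFunOnFinite.symm l)
      ((-1 : ℤ) ^ (∑ i : Fin N, l i) * (Nat.multinomial Finset.univ l : ℤ))

lemma PhiZ_eval {K : Type*} [NormedField K] (lam : Fin (N + 1) → K) :
    MvPolynomial.eval (fun i : Fin N => lam i.succ / lam 0) (MvPolynomial.map (Int.castRingHom K) (PhiZ p a))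
      = AHG.Phi1 p a lam := by
  unfold PhiZ AHG.Phi1
  rw [map_sum, map_sum]
  apply Finset.sum_congr rfl
  intro l _
  rw [MvPolynomial.map_monomial, MvPolynomial.eval_monomial, Finsupp.prod_fintype _ _ (by simp)]
  simp

lemma PhiZ_coeff (ν : Fin N →₀ ℕ) : MvPolynomial.coeff ν (PhiZ p a) =
    if (⇑ν) ∈ (Fintype.piFinset fun _ : Fin N => Finset.range p).filter
      (fun l => l ∈ AHG.LplusSet a ∧ ∑ i : Fin N, l i ≤ p - 1) then
    ((-1 : ℤ) ^ (∑ i : Fin N, ν i) * (Nat.multinomial Finset.univ ⇑ν : ℤ)) else 0 := by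
  unfold PhiZ
  rw [MvPolynomial.coeff_sum]
  have : ∀ l : Fin N → ℕ, (Finsupp.equivFunOnFinite.symm l = ν) ↔ (⇑ν = l) := by
    intro l
    constructor
    · rintro rfl; rfl
    · rintro rfl; ext; rfl
  simp only [MvPolynomial.coeff_monomial, this]
  rw [Finset.sum_ite_eq]

lemma PhiZ_const [Fact p.Prime] : MvPolynomial.constantCoeff (PhiZ p a) = 1 := by
  rw [MvPolynomial.constantCoeff_eq, PhiZ_coeff, if_pos]
  · simp [Nat.multinomial]
  · simp [AHG.LplusSet, (Fact.out : p.Prime).pos]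

variable {K : Type*} [NormedField K] [IsUltrametricDist K] [CompleteSpace K]

lemma memR'_of_Cl [Fact p.Prime] {c : MvPowerSeries (Fin N) K} (hc : Cl (PhiZ p a) c) :
    AHG.memR' p a c := by
  have hΦ := PhiZ_const p a
  set Φ := PhiZ p a with hΦdef
  set P : MvPolynomial (Fin N) K := MvPolynomial.map (Int.castRingHom K) Φ with hP
  have hPS : PS K Φ = (P : MvPowerSeries (Fin N) K) := rfl
  obtain ⟨B, hB1, hB⟩ := Cl_bdd hΦ hc
  have hstep : ∀ m : ℕ, ∃ (k : ℕ) (q : MvPolynomial (Fin N) K),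
      bd (c - (q : MvPowerSeries (Fin N) K) * ((PS K Φ)⁻¹) ^ k) (1 / ((m : ℝ) + 1)) := by
    intro m
    obtain ⟨g, ⟨k, q, rfl⟩, hg⟩ := hc (1 / ((m : ℝ) + 1)) (by positivity)
    exact ⟨k, q, hg⟩
  choose k q hq using hstep
  set yy : (Fin (N + 1) → K) → Fin N → K := fun lam i => lam i.succ / lam 0 with hyy
  set u : ℕ → (Fin (N + 1) → K) → K := fun m lam =>
    MvPolynomial.eval (yy lam) (q m) / MvPolynomial.eval (yy lam) (P ^ k m) with hu
  have hP1 : ∀ lam ∈ AHG.Dplus p a (K := K), ‖MvPolynomial.eval (yy lam) P‖ = 1 := by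
    intro lam hlam
    rw [hP, hΦdef, PhiZ_eval]
    exact hlam.2.2
  have hP0 : ∀ lam ∈ AHG.Dplus p a (K := K), MvPolynomial.eval (yy lam) P ≠ 0 :=
    fun lam hlam => ne_of_norm_one (hP1 lam hlam)
  have hΨ := PS_mul_inv (K := K) hΦ
  have hcau : ∀ lam ∈ AHG.Dplus p a (K := K), ∀ m m', m ≤ m' →
      dist (u m lam) (u m' lam) ≤ 1 / ((m : ℝ) + 1) := by
    intro lam hlam m m' hmm
    have hle : 1 / ((m' : ℝ) + 1) ≤ 1 / ((m : ℝ) + 1) := by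
      apply one_div_le_one_div_of_le (by positivity)
      have : (m : ℝ) ≤ m' := by exact_mod_cast hmm
      linarith
    have h1 : bd ((q m : MvPowerSeries (Fin N) K) * ((PS K Φ)⁻¹) ^ k m - (q m' : MvPowerSeries (Fin N) K) * ((PS K Φ)⁻¹) ^ k m')
        (1 / ((m : ℝ) + 1)) := by
      have := bd_sub (bd_mono (hq m') hle) (hq m)
      convert this using 1
      ring
    have h2 := bd_mul h1 (bd_pow_one (bd_PS (K := K) Φ) (k m + k m'))
    rw [mul_one] at h2
    have h3 : ((q m : MvPowerSeries (Fin N) K) * ((PS K Φ)⁻¹) ^ k m - (q m' : MvPowerSeries (Fin N) K) * ((PS K Φ)⁻¹) ^ k m')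
        * PS K Φ ^ (k m + k m') = ((q m * P ^ k m' - q m' * P ^ k m : MvPolynomial (Fin N) K) : MvPowerSeries (Fin N) K) := by
      have e1 : (PS K Φ)^ k m * ((PS K Φ)⁻¹) ^ k m = 1 := by rw [← mul_pow, hΨ, one_pow]
      have e2 : (PS K Φ)^ k m' * ((PS K Φ)⁻¹) ^ k m' = 1 := by rw [← mul_pow, hΨ, one_pow]
      rw [sub_eq_add_neg (q m * P ^ k m'), MvPolynomial.coe_add, ← neg_mul, MvPolynomial.coe_mul, MvPolynomial.coe_mul,
        MvPolynomial.coe_pow, MvPolynomial.coe_pow, ← hPS]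
      have : ((-q m' : MvPolynomial (Fin N) K) : MvPowerSeries (Fin N) K) = - (q m' : MvPowerSeries (Fin N) K) := by
        ext; simp
      rw [this, pow_add]
      linear_combination ((q m : MvPowerSeries (Fin N) K) * PS K Φ ^ k m') * e1 - ((q m' : MvPowerSeries (Fin N) K) * PS K Φ ^ k m) * e2
    rw [h3] at h2
    have h4 := eval_le (yy lam) hlam.2.1 _ h2
    have hp0 := hP0 lam hlam
    have h5 : u m lam - u m' lam = MvPolynomial.eval (yy lam) (q m * P ^ k m' - q m' * P ^ k m) /
        (MvPolynomial.eval (yy lam) P) ^ (k m + k m') := by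
      simp only [hu, map_pow, map_sub, map_mul]
      rw [div_sub_div _ _ (pow_ne_zero _ hp0) (pow_ne_zero _ hp0), pow_add]
      congr 1
      ring
    rw [dist_eq_norm, h5, norm_div, norm_pow, hP1 lam hlam, one_pow, div_one]
    exact h4
  have hlim0 : Filter.Tendsto (fun m : ℕ => 1 / ((m : ℝ) + 1)) Filter.atTop (nhds 0) :=
    tendsto_one_div_add_atTop_nhds_zero_nat
  have hex : ∀ lam ∈ AHG.Dplus p a (K := K), ∃ x, Filter.Tendsto (fun m => u m lam) Filter.atTop (nhds x) := by
    intro lam hlam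
    exact cauchySeq_tendsto_of_complete (cauchySeq_of_le_tendsto_0' _ (fun m m' h => hcau lam hlam m m' h) hlim0)
  set F : (Fin (N + 1) → K) → K := fun lam =>
    if h : lam ∈ AHG.Dplus p a (K := K) then (hex lam h).choose else 0 with hF
  have hFlim : ∀ lam ∈ AHG.Dplus p a (K := K), Filter.Tendsto (fun m => u m lam) Filter.atTop (nhds (F lam)) := by
    intro lam hlam
    rw [hF]
    simp only [dif_pos hlam]
    exact (hex lam hlam).choose_spec
  refine ⟨F, ⟨u, ?_, ?_⟩, ?_⟩
  · intro m
    refine ⟨q m, P ^ k m, ?_, fun lam _ => rfl⟩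
    intro lam hlam
    rw [map_pow]
    exact pow_ne_zero _ (hP0 lam hlam)
  · rw [Metric.tendstoUniformlyOn_iff]
    intro ε hε
    filter_upwards [hlim0.eventually (gt_mem_nhds hε)] with m hm lam hlam
    refine lt_of_le_of_lt ?_ hm
    rw [dist_comm]
    apply le_of_tendsto (Filter.Tendsto.dist tendsto_const_nhds (hFlim lam hlam))
    filter_upwards [Filter.eventually_ge_atTop m] with m' hm'
    exact hcau lam hlam m m' hm'
  · intro lam hlam
    have hy : ∀ i, ‖yy lam i‖ < 1 := hlam.2
    have hPev : ev (yy lam) (PS K Φ) = MvPolynomial.eval (yy lam) P := ev_poly _ _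
    have hevΨ : ev (yy lam) (PS K Φ) * ev (yy lam) ((PS K Φ)⁻¹) = 1 := by
      rw [← ev_mul _ hy (bd_PS Φ) (bd_PS_inv hΦ), hΨ]
      have := ev_poly (yy lam) 1
      simpa using this
    have hn1 := ev_le (yy lam) hy (bd_PS (K := K) Φ)
    have hn2 := ev_le (yy lam) hy (bd_PS_inv (K := K) hΦ)
    have hn : ‖ev (yy lam) (PS K Φ)‖ = 1 := by
      apply le_antisymm hn1
      have h1 : ‖ev (yy lam) (PS K Φ)‖ * ‖ev (yy lam) ((PS K Φ)⁻¹)‖ = 1 := by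
        rw [← norm_mul, hevΨ, norm_one]
      nlinarith [norm_nonneg (ev (yy lam) (PS K Φ))]
    have hD : lam ∈ AHG.Dplus p a (K := K) := by
      refine ⟨hlam.1, fun i => (hlam.2 i).le, ?_⟩
      rw [← PhiZ_eval]
      change ‖MvPolynomial.eval (yy lam) P‖ = 1
      rw [← hPev, hn]
    have hval : ev (yy lam) c = F lam := by
      apply tendsto_nhds_unique _ (hFlim lam hD)
      rw [tendsto_iff_dist_tendsto_zero]
      apply squeeze_zero (fun _ => dist_nonneg) _ hlim0
      intro m
      have hbk := bd_pow_one (bd_PS_inv (K := K) hΦ) (k m)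
      obtain ⟨cq, _, hcq⟩ := bd_poly (q m)
      have hevk : ev (yy lam) (PS K Φ ^ k m) * ev (yy lam) ((PS K Φ)⁻¹ ^ k m) = 1 := by
        rw [← ev_mul _ hy (bd_pow_one (bd_PS Φ) _) hbk, ← mul_pow, hΨ, one_pow]
        have := ev_poly (yy lam) 1
        simpa using this
      have hevP : ev (yy lam) (PS K Φ ^ k m) = MvPolynomial.eval (yy lam) (P ^ k m) := by
        rw [hPS, ← MvPolynomial.coe_pow]
        exact ev_poly _ _
      have hum : u m lam = ev (yy lam) ((q m : MvPowerSeries (Fin N) K) * ((PS K Φ)⁻¹) ^ k m) := by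
        rw [ev_mul _ hy hcq hbk, ev_poly]
        simp only [hu]
        rw [← hevP]
        rw [div_eq_iff (left_ne_zero_of_mul_eq_one hevk), mul_assoc, mul_comm (ev _ _), hevk, mul_one]
      rw [hum, dist_comm, dist_eq_norm, ← ev_sub _ hy hB (bd_mul hcq hbk)]
      exact ev_le _ hy (hq m)
    rw [← hval]
    exact (summ _ hy hB).hasSum

end
end AHGp

open scoped BigOperators Classical
namespace AHGp
open MvPowerSeries

section
variable {n N : ℕ} (p : ℕ) [Fact p.Prime] (a : Fin (N + 1) → Fin n → ℤ)
variable {K : Type*} [NormedField K] [IsUltrametricDist K]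

lemma poly_of_fin (f : MvPowerSeries (Fin N) K) (D : ℕ) (h : ∀ ν : Fin N →₀ ℕ, D < ν.degree → coeff ν f = 0) :
    ∃ q : MvPolynomial (Fin N) K, f = (q : MvPowerSeries (Fin N) K) := by
  have hfin := Finsupp.finite_of_degree_le (σ := Fin N) D
  refine ⟨∑ ν ∈ hfin.toFinset, MvPolynomial.monomial ν (coeff ν f), ?_⟩
  ext ν
  rw [MvPolynomial.coeff_coe, MvPolynomial.coeff_sum]
  simp only [MvPolynomial.coeff_monomial]
  rw [Finset.sum_ite_eq']
  split_ifs with hν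
  · rfl
  · apply h
    simpa using hν

lemma Bone_poly (π : K) (μ : Fin (n + 1) → ℤ) :
    ∃ q : MvPolynomial (Fin N) K, AHG.Bone p a π μ = (q : MvPowerSeries (Fin N) K) := by
  apply poly_of_fin _ (μ 0).toNat
  intro ν hν
  change AHG.Bone p a π μ ν = 0
  unfold AHG.Bone
  rw [if_neg]
  rintro ⟨h1, -⟩
  rw [Finsupp.degree_eq_sum] at hν
  have : ((∑ i, ν i : ℕ) : ℤ) = ∑ i, (ν i : ℤ) := by push_cast; rfl
  omega

lemma Bone_bd (hp2 : p ≠ 2) (ι : ℚ_[p] →+* K) (hι : ∀ x, ‖ι x‖ = ‖x‖) (π : K)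
    (hπ : π ^ (p - 1) = -(p : K)) (ν ρ : Fin (n + 1) → ℤ) (hν : 2 ≤ ν 0) (hρ : 1 ≤ ρ 0) :
    bd (π ^ (ρ 0 - ν 0) • AHG.Bone p a π ((p : ℤ) • ν - ρ)) (((p : ℝ)⁻¹) ^ 2) := by
  intro l
  rw [coeff_smul]
  change ‖π ^ (ρ 0 - ν 0) * AHG.Bone p a π ((p : ℤ) • ν - ρ) l‖ ≤ _
  unfold AHG.Bone
  split_ifs with h
  · have h1 := h.1
    set k := (((p : ℤ) • ν - ρ) 0 - ∑ i, (l i : ℤ)).toNat with hk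
    apply key_estimate p hp2 ι hι π hπ (ν 0) (ρ 0) (k + ∑ i, l i) _ hν hρ _
      (dworkB_prod_bound p ι hι π hπ k l)
    push_cast
    rw [hk, Int.toNat_of_nonneg h1]
    simp
  · rw [mul_zero, norm_zero]; positivity

lemma choose_mod (s : ℕ) (hs : s ≤ p - 1) : (p : ℤ) ∣ ((p - 1).choose s : ℤ) - (-1) ^ s := by
  have hp := (Fact.out : p.Prime)
  induction s with
  | zero => simp
  | succ s ih =>
    have h1 := ih (by omega)
    have h2 : p ∣ p.choose (s + 1) := hp.dvd_choose_self (by omega) (by omega)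
    have h3 : p.choose (s + 1) = (p - 1).choose s + (p - 1).choose (s + 1) := by
      have : p = (p - 1) + 1 := by have := hp.pos; omega
      conv_lhs => rw [this]
      exact Nat.choose_succ_succ _ _
    have h4 : (p : ℤ) ∣ (p.choose (s + 1) : ℤ) := by exact_mod_cast h2
    rw [h3] at h4
    push_cast at h4
    have h5 := dvd_sub h4 h1
    have e : (((p - 1).choose (s + 1) : ℕ) : ℤ) - (-1) ^ (s + 1) =
        ((((p - 1).choose s : ℕ) : ℤ) + (((p - 1).choose (s + 1) : ℕ) : ℤ)) -
          ((((p - 1).choose s : ℕ) : ℤ) - (-1) ^ s) := by ring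
    rw [e]
    exact h5

lemma norm_fact (ι : ℚ_[p] →+* K) (hι : ∀ x, ‖ι x‖ = ‖x‖) : ‖(((p - 1).factorial : ℕ) : K)‖ = 1 := by
  have hp := (Fact.out : p.Prime)
  rw [norm_nat p ι hι]
  have h1 := Padic.norm_natCast_lt_one_iff (p := p) (n := (p - 1).factorial)
  have h2 : ¬ p ∣ (p - 1).factorial := by
    rw [hp.dvd_factorial]
    have := hp.pos
    omega
  have h3 : ‖((p - 1).factorial : ℚ_[p])‖ ≤ 1 := IsUltrametricDist.norm_natCast_le_one _ _
  rcases h3.lt_or_eq with h | h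
  · exact absurd (h1.1 h) h2
  · exact h

lemma norm_c0 (ι : ℚ_[p] →+* K) (hι : ∀ x, ‖ι x‖ = ‖x‖) (π : K)
    (hπ : π ^ (p - 1) = -(p : K)) : ‖π ^ (p - 1) / (((p - 1).factorial : ℕ) : K)‖ = (p : ℝ)⁻¹ := by
  rw [norm_div, norm_fact p ι hι, div_one, norm_pow, norm_pi p ι hι π hπ]

lemma Bone_main (ι : ℚ_[p] →+* K) (hι : ∀ x, ‖ι x‖ = ‖x‖) (π : K)
    (hπ : π ^ (p - 1) = -(p : K)) :
    bd (AHG.Bone p a π ((p : ℤ) • AHG.hat (a 0) - AHG.hat (a 0)) -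
      (π ^ (p - 1) / (((p - 1).factorial : ℕ) : K)) • PS K (PhiZ p a)) (((p : ℝ)⁻¹) ^ 2) := by
  intro l
  have hp := (Fact.out : p.Prime)
  rw [map_sub, coeff_smul]
  have hps : coeff l (PS K (PhiZ p a)) = ((MvPolynomial.coeff l (PhiZ p a) : ℤ) : K) := by
    rw [PS, MvPolynomial.coeff_coe, MvPolynomial.coeff_map]; rfl
  rw [hps, PhiZ_coeff]
  change ‖AHG.Bone p a π _ l - _‖ ≤ _
  unfold AHG.Bone
  have hμ0 : ((p : ℤ) • AHG.hat (a 0) - AHG.hat (a 0)) 0 = (p : ℤ) - 1 := by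
    simp [AHG.hat]
  rw [hμ0]
  have hcast : ((∑ i, l i : ℕ) : ℤ) = ∑ i, (l i : ℤ) := by push_cast; rfl
  set s := ∑ i, l i with hs
  have hiff : (0 ≤ (p : ℤ) - 1 - ∑ i : Fin N, (l i : ℤ) ∧
        ((p : ℤ) - 1 - ∑ i : Fin N, (l i : ℤ)) • AHG.hat (a 0) +
          ∑ i : Fin N, (l i : ℤ) • AHG.hat (a i.succ) = (p : ℤ) • AHG.hat (a 0) - AHG.hat (a 0)) ↔
      (⇑l) ∈ (Fintype.piFinset fun _ : Fin N => Finset.range p).filter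
      (fun l => l ∈ AHG.LplusSet a ∧ ∑ i : Fin N, l i ≤ p - 1) := by
    rw [Finset.mem_filter, Fintype.mem_piFinset]
    have hpp := hp.pos
    have hL : (⇑l) ∈ AHG.LplusSet a ↔ ∑ i : Fin N, (l i : ℤ) • AHG.hat (a i.succ) = (s : ℤ) • AHG.hat (a 0) := by
      change (∑ i : Fin N, l i • AHG.hat (a i.succ) = (∑ i : Fin N, l i) • AHG.hat (a 0)) ↔ _
      simp only [natCast_zsmul]
      rfl
    rw [hL, ← hcast]
    have hle : ∀ i, l i ≤ s := fun i => Finset.single_le_sum (f := fun i => l i) (fun _ _ => Nat.zero_le _) (Finset.mem_univ i)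
    have heq : ((p : ℤ) - 1 - (s : ℤ)) • AHG.hat (a 0) +
          ∑ i : Fin N, (l i : ℤ) • AHG.hat (a i.succ) = (p : ℤ) • AHG.hat (a 0) - AHG.hat (a 0) ↔
        ∑ i : Fin N, (l i : ℤ) • AHG.hat (a i.succ) = (s : ℤ) • AHG.hat (a 0) := by
      rw [sub_smul, sub_smul, one_smul]
      constructor
      · intro h
        have := congrArg (fun x => x - ((p : ℤ) • AHG.hat (a 0) - AHG.hat (a 0)) + (s : ℤ) • AHG.hat (a 0)) h
        convert this using 1 <;> abel
      · intro h
        rw [h]; abel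
    rw [heq]
    constructor
    · rintro ⟨h1, h2⟩
      refine ⟨fun i => ?_, h2, ?_⟩
      · rw [Finset.mem_range]
        have := hle i
        omega
      · change s ≤ p - 1
        omega
    · rintro ⟨-, h2, h3⟩
      have h3' : s ≤ p - 1 := h3
      exact ⟨by omega, h2⟩
  by_cases hc : (⇑l) ∈ (Fintype.piFinset fun _ : Fin N => Finset.range p).filter
      (fun l => l ∈ AHG.LplusSet a ∧ ∑ i : Fin N, l i ≤ p - 1)
  · rw [if_pos hc, if_pos (hiff.2 hc)]
    rw [Finset.mem_filter, Fintype.mem_piFinset] at hc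
    have hsp : s ≤ p - 1 := hc.2.2
    have hpp := hp.pos
    have ht : ((p : ℤ) - 1 - ∑ i : Fin N, (l i : ℤ)).toNat = p - 1 - s := by rw [← hcast]; omega
    rw [ht, dworkB_small p π _ (by omega)]
    have hprod : ∏ i, AHG.dworkB p π (l i) = π ^ s / ((∏ i, (l i).factorial : ℕ) : K) := by
      rw [hs, ← Finset.prod_pow_eq_pow_sum]
      push_cast
      rw [← Finset.prod_div_distrib]
      apply Finset.prod_congr rfl
      intro i _
      exact dworkB_small p π _ (Finset.mem_range.1 (hc.1 i))
    rw [hprod]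
    have hmul : (∏ i, (l i).factorial) * Nat.multinomial Finset.univ ⇑l = s.factorial :=
      Nat.multinomial_spec _ _
    have hch := Nat.choose_mul_factorial_mul_factorial hsp
    obtain ⟨z, hz⟩ := choose_mod p s hsp
    have hPne : ((∏ i, (l i).factorial : ℕ) : K) ≠ 0 :=
      cast_ne p ι hι _ (Finset.prod_ne_zero_iff.2 (fun i _ => Nat.factorial_ne_zero _))
    have hF : (((p - 1).factorial : ℕ) : K) ≠ 0 := cast_ne p ι hι _ (Nat.factorial_ne_zero _)
    have hG : (((p - 1 - s).factorial : ℕ) : K) ≠ 0 := cast_ne p ι hι _ (Nat.factorial_ne_zero _)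
    have hS : ((s.factorial : ℕ) : K) ≠ 0 := cast_ne p ι hι _ (Nat.factorial_ne_zero _)
    have hmulK := congrArg (Nat.cast : ℕ → K) hmul
    have hchK := congrArg (Nat.cast : ℕ → K) hch
    rw [Nat.cast_mul] at hmulK
    rw [Nat.cast_mul, Nat.cast_mul] at hchK
    have hzK := congrArg (Int.cast : ℤ → K) hz
    push_cast at hzK
    have hpow : π ^ (p - 1) = π ^ (p - 1 - s) * π ^ s := by rw [← pow_add]; congr 1; omega
    have hkey : π ^ (p - 1 - s) / (((p - 1 - s).factorial : ℕ) : K) * (π ^ s / ((∏ i, (l i).factorial : ℕ) : K))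
        - (π ^ (p - 1) / (((p - 1).factorial : ℕ) : K)) •
          (((-1 : ℤ) ^ s * (Nat.multinomial Finset.univ ⇑l : ℤ) : ℤ) : K)
        = (π ^ (p - 1) / (((p - 1).factorial : ℕ) : K)) * ((p : K) * ((z * (Nat.multinomial Finset.univ ⇑l : ℕ) : ℤ) : K)) := by
      push_cast
      push_cast at hPne hmulK
      rw [smul_eq_mul, hpow]
      generalize (∏ i, ((l i).factorial : K)) = P at *
      generalize ((Nat.multinomial Finset.univ ⇑l : ℕ) : K) = M at *
      generalize (((p - 1).choose s : ℕ) : K) = Cc at *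
      have e1 : (p : K) * (z * M) = (Cc - (-1) ^ s) * M := by rw [hzK]; ring
      rw [e1, ← hchK, ← hmulK]
      have hCc : Cc ≠ 0 := by
        rintro rfl
        rw [zero_mul, zero_mul] at hchK
        exact hF hchK.symm
      have hM : M ≠ 0 := by
        rintro rfl
        rw [mul_zero] at hmulK
        exact hS hmulK.symm
      field_simp
    rw [← smul_eq_mul (π ^ (p - 1) / _), hkey, norm_mul, norm_mul, norm_c0 p ι hι π hπ, norm_p p ι hι, pow_two]
    have := IsUltrametricDist.norm_intCast_le_one K (z * (Nat.multinomial Finset.univ ⇑l : ℕ))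
    have hpi : (0:ℝ) ≤ (p:ℝ)⁻¹ := by positivity
    apply mul_le_mul_of_nonneg_left _ hpi
    exact mul_le_of_le_one_right hpi this
  · rw [if_neg hc, if_neg (fun h => hc (hiff.1 h))]
    simp

end
end AHGp

open scoped BigOperators Classical
namespace AHGp
open MvPowerSeries

section
variable {N : ℕ} (p : ℕ) [Fact p.Prime]
variable {K : Type*} [NormedField K] [IsUltrametricDist K]

lemma core (ι : ℚ_[p] →+* K) (hι : ∀ x, ‖ι x‖ = ‖x‖)
    {Φ : MvPolynomial (Fin N) ℤ} (hΦ : MvPolynomial.constantCoeff Φ = 1)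
    {I : Type*} (m0 : I) (T : I → I → MvPowerSeries (Fin N) K) (ζ η : I → MvPowerSeries (Fin N) K)
    (c : K) (hc : ‖c‖ = (p : ℝ)⁻¹)
    (hT : ∀ ρ ν, Cl Φ (T ρ ν)) (hTs : ∀ ρ ν, ν ≠ m0 → bd (T ρ ν) (((p : ℝ)⁻¹) ^ 2))
    (hT0 : bd (T m0 m0 - c • PS K Φ) (((p : ℝ)⁻¹) ^ 2))
    (hζ0 : ζ m0 = 1) (hζ : ∀ ρ, bd (ζ ρ) 1) (hη : ∀ ρ, η ρ = η m0 * ζ ρ)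
    (hsum : ∀ ρ, ∀ ε : ℝ, 0 < ε → ∃ s0 : Finset I, ∀ s, s0 ⊆ s →
      bd (η ρ - ∑ ν ∈ s, T ρ ν * AHG.frobR p (ζ ν)) ε) :
    Cl Φ (η m0) ∧ constantCoeff (η m0) ≠ 0 := by
  have hp0 : (0 : ℝ) < (p : ℝ)⁻¹ := by
    have := (Fact.out : p.Prime).pos
    positivity
  have hp1 := p_inv_lt p
  set t : ℝ := (p : ℝ)⁻¹ with ht
  have hcne : c ≠ 0 := by
    rw [← norm_pos_iff, hc]; exact hp0
  -- first approximation of the leading component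
  have hη0 : bd (η m0 - c • PS K Φ) (t ^ 2) := by
    obtain ⟨s0, hs0⟩ := hsum m0 (t ^ 2) (by positivity)
    have h1 := hs0 (insert m0 s0) (Finset.subset_insert _ _)
    have h2 : bd (∑ ν ∈ (insert m0 s0).erase m0, T m0 ν * AHG.frobR p (ζ ν)) (t ^ 2) := by
      apply bd_sum _ _ (by positivity)
      intro ν hν
      have := bd_mul (hTs m0 ν (Finset.ne_of_mem_erase hν)) (bd_frob p (hζ ν))
      rwa [mul_one] at this
    rw [← Finset.add_sum_erase _ _ (Finset.mem_insert_self m0 s0), hζ0, frob_one, mul_one] at h1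
    have := bd_add (bd_add h1 h2) hT0
    convert this using 1
    ring
  have hstep : ∀ k : ℕ, ∀ ρ, ∃ e, Cl Φ e ∧ bd (ζ ρ - e) (t ^ k) := by
    intro k
    induction k with
    | zero =>
      intro ρ
      refine ⟨0, Cl_zero, ?_⟩
      rw [sub_zero, pow_zero]
      exact hζ ρ
    | succ k ih =>
      choose e he1 he2 using ih
      set e0 : I → MvPowerSeries (Fin N) K := fun ν => if ν = m0 then 1 else e ν with he0
      have h01 : ∀ ν, Cl Φ (e0 ν) := by
        intro ν
        simp only [he0]
        split_ifs
        · exact Cl_one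
        · exact he1 ν
      have h02 : ∀ ν, ν ≠ m0 → bd (ζ ν - e0 ν) (t ^ k) := by
        intro ν hν
        simp only [he0]
        rw [if_neg hν]
        exact he2 ν
      have h03 : e0 m0 = 1 := by simp [he0]
      have hE : ∀ ρ, ∃ E, Cl Φ E ∧ bd (η ρ - E) (t ^ (k + 2)) := by
        intro ρ
        obtain ⟨s0, hs0⟩ := hsum ρ (t ^ (k + 2)) (by positivity)
        have h1 := hs0 s0 (Finset.Subset.refl _)
        refine ⟨∑ ν ∈ s0, T ρ ν * AHG.frobR p (e0 ν), ?_, ?_⟩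
        · exact Cl_sum hΦ _ _ (fun ν _ => Cl_mul hΦ (hT ρ ν) (Cl_frob p ι hι hΦ (h01 ν)))
        · have h2 : bd (∑ ν ∈ s0, T ρ ν * AHG.frobR p (ζ ν - e0 ν)) (t ^ (k + 2)) := by
            apply bd_sum _ _ (by positivity)
            intro ν _
            by_cases hν : ν = m0
            · rw [hν, hζ0, h03, frob_sub, sub_self, mul_zero]
              exact bd_zero (by positivity)
            · have := bd_mul (hTs ρ ν hν) (bd_frob p (h02 ν hν))
              rwa [← pow_add, add_comm] at this
          have h3 := bd_add h1 h2
          convert h3 using 1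
          simp only [frob_sub, mul_sub, Finset.sum_sub_distrib]
          ring
      choose E hE1 hE2 using hE
      have hEc : bd (E m0 - c • PS K Φ) (t ^ 2) := by
        have h1 : bd (η m0 - E m0) (t ^ 2) := bd_mono (hE2 m0) (by
          apply pow_le_pow_of_le_one hp0.le hp1.le; omega)
        have := bd_sub hη0 h1
        convert this using 1
        ring
      set Ψ := (PS K Φ)⁻¹ with hΨ
      have hΨ1 : PS K Φ * Ψ = 1 := PS_mul_inv hΦ
      have hΨb : bd Ψ 1 := bd_PS_inv hΦ
      set h : MvPowerSeries (Fin N) K := c⁻¹ • (Ψ * (E m0 - c • PS K Φ)) with hh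
      have hhb : bd h t := by
        have := bd_smul c⁻¹ (bd_mul hΨb hEc)
        rw [norm_inv, hc, one_mul, pow_two, ← mul_assoc, inv_mul_cancel₀ hp0.ne', one_mul] at this
        exact this
      have hhC : Cl Φ h := Cl_smul hΦ _ (Cl_mul hΦ Cl_PS_inv (Cl_sub hΦ (hE1 m0) (Cl_smul hΦ _ (Cl_poly _))))
      have hgeo := Cl_geo hΦ hhC hhb hp1
      have hcc := const_one_add hhb hp1
      have hmul : (1 + h) * (1 + h)⁻¹ = 1 := MvPowerSeries.mul_inv_cancel _ (ne_of_norm_one hcc)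
      have hgb : bd (1 + h)⁻¹ 1 := bd_inv (bd_add bd_one (bd_mono hhb hp1.le)) hcc
      set W : MvPowerSeries (Fin N) K := c⁻¹ • (Ψ * (1 + h)⁻¹) with hW
      have hWb : bd W t⁻¹ := by
        have := bd_smul c⁻¹ (bd_mul hΨb hgb)
        rw [norm_inv, hc, one_mul, mul_one] at this
        exact this
      have hWC : Cl Φ W := Cl_smul hΦ _ (Cl_mul hΦ Cl_PS_inv hgeo)
      have hEW : E m0 * W = 1 := by
        have hCC : (C c : MvPowerSeries (Fin N) K) * C c⁻¹ = 1 := by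
          rw [← map_mul, mul_inv_cancel₀ hcne, map_one]
        rw [← hmul, hW]
        generalize (1 + h)⁻¹ = v
        rw [hh]
        simp only [smul_eq_C_mul]
        linear_combination C c⁻¹ * Ψ * v * (PS K Φ * C c - 0) * 0 + v * hΨ1 * (C c * C c⁻¹) + v * hCC
      intro ρ
      refine ⟨E ρ * W, Cl_mul hΦ (hE1 ρ) hWC, ?_⟩
      have e1 : ζ ρ - E ρ * W = W * (ζ ρ * (E m0 - η m0) + (η ρ - E ρ)) := by
        rw [hη ρ]
        linear_combination (-(ζ ρ)) * hEW
      rw [e1]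
      have h5 : bd (E m0 - η m0) (t ^ (k + 2)) := by
        have := bd_neg (hE2 m0)
        rwa [neg_sub] at this
      have h6 := bd_mul (hζ ρ) h5
      rw [one_mul] at h6
      have h7 := bd_mul hWb (bd_add h6 (hE2 ρ))
      apply bd_mono h7
      rw [show k + 2 = (k + 1) + 1 by ring, pow_succ t (k + 1), mul_comm, mul_assoc, mul_inv_cancel₀ hp0.ne', mul_one]
  have hζC : ∀ ρ, Cl Φ (ζ ρ) := by
    intro ρ
    apply Cl_closed
    intro ε hε
    obtain ⟨k, hk⟩ := exists_pow_lt_of_lt_one hε hp1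
    obtain ⟨e, h1, h2⟩ := hstep k ρ
    exact ⟨e, h1, bd_mono h2 hk.le⟩
  refine ⟨?_, ?_⟩
  · apply Cl_closed
    intro ε hε
    obtain ⟨s0, hs0⟩ := hsum m0 ε hε
    exact ⟨_, Cl_sum hΦ _ _ (fun ν _ => Cl_mul hΦ (hT m0 ν) (Cl_frob p ι hι hΦ (hζC ν))), hs0 s0 (Finset.Subset.refl _)⟩
  · intro h0
    have h1 := hη0 0
    rw [map_sub, coeff_smul, coeff_zero_eq_constantCoeff_apply, coeff_zero_eq_constantCoeff_apply, h0, PS_const hΦ] at h1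
    rw [zero_sub, norm_neg, mul_one, hc] at h1
    nlinarith

end
end AHGp

open scoped BigOperators Classical
namespace AHGp
open MvPowerSeries

section
variable {n N : ℕ} (p : ℕ) [Fact p.Prime] (a : Fin (N + 1) → Fin n → ℤ)
variable {K : Type*} [NormedField K] [IsUltrametricDist K]

/-- the kernel of the series defining `η_ρ` -/
noncomputable def Tk (π : K) (ρ ν : AHG.Msub a) : MvPowerSeries (Fin N) K :=
  if (p : ℤ) • ν.1 - ρ.1 ∈ AHG.latticeM a then
    π ^ (ρ.1 0 - ν.1 0) • AHG.Bone p a π ((p : ℤ) • ν.1 - ρ.1)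
  else 0

lemma eta_eq (π : K) (ξ : AHG.Msub a → MvPowerSeries (Fin N) K) (ρ ν : AHG.Msub a) :
    AHG.etaTerm p a π ξ ρ.1 ν = Tk p a π ρ ν * AHG.frobR p (ξ ν) := by
  unfold AHG.etaTerm Tk
  split_ifs
  · rw [smul_mul_assoc]
  · rw [zero_mul]

lemma memR_bd {f : MvPowerSeries (Fin N) K} (h : AHG.memR f) : bd f (AHG.Rnorm f) :=
  fun ν => le_ciSup h ν

lemma bd_memR {f : MvPowerSeries (Fin N) K} {c : ℝ} (h : bd f c) : AHG.memR f :=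
  ⟨c, by rintro _ ⟨ν, rfl⟩; exact h ν⟩

lemma bd_Rnorm {f : MvPowerSeries (Fin N) K} {c : ℝ} (h : bd f c) : AHG.Rnorm f ≤ c :=
  ciSup_le h

lemma lattice_main : (p : ℤ) • AHG.hat (a 0) - AHG.hat (a 0) ∈ AHG.latticeM a := by
  have hp := (Fact.out : p.Prime).one_le
  have hp' : (0 : ℝ) ≤ (p : ℝ) - 1 := by
    have : (1 : ℝ) ≤ p := by exact_mod_cast hp
    linarith
  constructor
  · obtain ⟨t, ht, hx⟩ := hat_mem_cone a 0
    refine ⟨fun j => ((p : ℝ) - 1) * t j, fun j => mul_nonneg hp' (ht j), ?_⟩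
    have : (fun i => ((((p : ℤ) • AHG.hat (a 0) - AHG.hat (a 0)) i : ℤ) : ℝ)) =
        ((p : ℝ) - 1) • (fun i => (AHG.hat (a 0) i : ℝ)) := by
      ext i
      simp
      ring
    rw [this, hx, Finset.smul_sum]
    simp only [smul_smul]
  · have : AHG.hat (a 0) ∈ AddSubgroup.closure (Set.range fun j => AHG.hat (a j)) :=
      AddSubgroup.subset_closure ⟨0, rfl⟩
    exact sub_mem (zsmul_mem this _) this

end
end AHGp

/-- under the hypotheses of Statement 14, the ratio
`ξ_{â_0}(λ)/ξ_{â_0}(λ^p)` belongs to `R'`. -/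
theorem stmt_15 (p : ℕ) [Fact p.Prime] (hp2 : p ≠ 2)
    {K : Type*} [NormedField K] [IsUltrametricDist K] [CompleteSpace K] [IsAlgClosed K]
    (ι : ℚ_[p] →+* K) (hι : ∀ x, ‖ι x‖ = ‖x‖)
    (π : K) (hπ : π ^ (p - 1) = -(p : K))
    (n N : ℕ) (hn : 0 < n) (hN : 0 < N) (a : Fin (N + 1) → Fin n → ℤ)
    (hΔ : AHG.uniqueInteriorPoint a)
    (μ0 : AHG.Msub a) (hμ0 : μ0.1 = AHG.hat (a 0))
    (ξ : AHG.Msub a → MvPowerSeries (Fin N) K) (hξ : AHG.memS a ξ) (κ : K)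
    (heig : ∀ ρ : AHG.Msub a, AHG.HasSumR (AHG.etaTerm p a π ξ ρ.1) (κ • ξ ρ))
    (hinv : AHG.invR (ξ μ0)) (hn0 : AHG.Snorm a ξ = AHG.Rnorm (ξ μ0)) :
    AHG.memR' p a (ξ μ0 * (AHG.frobR p (ξ μ0))⁻¹) := by
  obtain ⟨hm0, g, hmg, hg⟩ := hinv
  have hΦ := AHGp.PhiZ_const p a
  set A : ℝ := ‖MvPowerSeries.constantCoeff (ξ μ0)‖ with hA
  have hb0 : AHGp.bd (ξ μ0) A := AHGp.bd_of_inv (AHGp.memR_bd hm0) (AHGp.memR_bd hmg) hg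
  have hbg : AHGp.bd g ‖MvPowerSeries.constantCoeff g‖ :=
    AHGp.bd_of_inv (AHGp.memR_bd hmg) (AHGp.memR_bd hm0) (by rw [mul_comm]; exact hg)
  have hAg : A * ‖MvPowerSeries.constantCoeff g‖ = 1 := by
    rw [hA, ← norm_mul, ← map_mul, hg, map_one, norm_one]
  have hApos : 0 < A := by
    rcases (norm_nonneg (MvPowerSeries.constantCoeff (ξ μ0))).lt_or_eq with h | h
    · exact h
    · rw [hA, ← h, zero_mul] at hAg
      exact absurd hAg zero_ne_one
  -- bounds of all the components
  obtain ⟨B, hB⟩ := hξ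
  have hBb : ∀ ρ, AHGp.bd (ξ ρ) B := fun ρ ν => hB ⟨(ρ, ν), rfl⟩
  have hSb : BddAbove (Set.range fun ρ : AHG.Msub a => AHG.Rnorm (ξ ρ)) :=
    ⟨B, by rintro _ ⟨ρ, rfl⟩; exact AHGp.bd_Rnorm (hBb ρ)⟩
  have hbA : ∀ ρ, AHGp.bd (ξ ρ) A := by
    intro ρ
    apply AHGp.bd_mono (AHGp.memR_bd (AHGp.bd_memR (hBb ρ)))
    calc AHG.Rnorm (ξ ρ) ≤ AHG.Snorm a ξ := le_ciSup hSb ρ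
      _ = AHG.Rnorm (ξ μ0) := hn0
      _ ≤ A := AHGp.bd_Rnorm hb0
  have hT : ∀ ρ ν, ∃ q : MvPolynomial (Fin N) K, AHGp.Tk p a π ρ ν = (q : MvPowerSeries (Fin N) K) := by
    intro ρ ν
    unfold AHGp.Tk
    split_ifs
    · obtain ⟨q, hq⟩ := AHGp.Bone_poly p a π ((p : ℤ) • ν.1 - ρ.1)
      refine ⟨MvPolynomial.C (π ^ (ρ.1 0 - ν.1 0)) * q, ?_⟩
      rw [hq, MvPolynomial.coe_mul, MvPolynomial.coe_C, MvPowerSeries.smul_eq_C_mul]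
    · exact ⟨0, by simp⟩
  set ζ : AHG.Msub a → MvPowerSeries (Fin N) K := fun ρ => ξ ρ * g with hζ
  set η : AHG.Msub a → MvPowerSeries (Fin N) K := fun ρ => κ • ξ ρ * AHG.frobR p g with hη
  have hzt : ∀ ν, AHG.frobR p (ζ ν) = AHG.frobR p (ξ ν) * AHG.frobR p g := fun ν => AHGp.frob_mul p _ _
  have hfg := AHGp.bd_frob p hbg
  have hcore := AHGp.core p ι hι hΦ μ0 (AHGp.Tk p a π) ζ η
    (π ^ (p - 1) / (((p - 1).factorial : ℕ) : K)) (AHGp.norm_c0 p ι hι π hπ)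
    (by
      intro ρ ν
      obtain ⟨q, hq⟩ := hT ρ ν
      rw [hq]
      exact AHGp.Cl_poly q)
    (by
      intro ρ ν hν
      unfold AHGp.Tk
      split_ifs
      · apply AHGp.Bone_bd p a hp2 ι hι π hπ _ _ _ (AHGp.Mint_pos a _ ρ.2)
        have h1 := AHGp.Mint_pos a _ ν.2
        by_contra hc
        apply hν
        apply Subtype.ext
        rw [hμ0]
        exact AHGp.Mint_eq a hΔ _ ν.2 (by omega)
      · exact AHGp.bd_zero (by positivity))
    (by
      unfold AHGp.Tk
      rw [hμ0, if_pos (AHGp.lattice_main p a), sub_self, zpow_zero, one_smul]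
      exact AHGp.Bone_main p a ι hι π hπ)
    hg
    (by
      intro ρ
      have := AHGp.bd_mul (hbA ρ) hbg
      rwa [hAg] at this)
    (by
      intro ρ
      simp only [hη, hζ, MvPowerSeries.smul_eq_C_mul]
      linear_combination (-(MvPowerSeries.C κ * ξ ρ * AHG.frobR p g)) * hg)
    (by
      intro ρ ε hε
      have h1 := (heig ρ).eventually (gt_mem_nhds (show 0 < ε * A by positivity))
      rw [Filter.eventually_atTop] at h1
      obtain ⟨s0, hs0⟩ := h1
      refine ⟨s0, fun s hs => ?_⟩
      have h2 := hs0 s hs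
      have hbdd : ∃ c, AHGp.bd (κ • ξ ρ - ∑ ν ∈ s, AHG.etaTerm p a π ξ ρ.1 ν) c := by
        have hex : ∀ ν, ∃ c : ℝ, 0 ≤ c ∧ AHGp.bd (AHG.etaTerm p a π ξ ρ.1 ν) c := by
          intro ν
          obtain ⟨q, hq⟩ := hT ρ ν
          obtain ⟨c, hc, hcq⟩ := AHGp.bd_poly q
          rw [AHGp.eta_eq, hq]
          have := AHGp.bd_mul hcq (AHGp.bd_frob p (hbA ν))
          exact ⟨_, AHGp.bd_nonneg this, this⟩
        choose c hc0 hc using hex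
        have hk := AHGp.bd_smul κ (hbA ρ)
        have hk0 := AHGp.bd_nonneg hk
        have hs0 : 0 ≤ ∑ ν ∈ s, c ν := Finset.sum_nonneg (fun ν _ => hc0 ν)
        refine ⟨‖κ‖ * A + ∑ ν ∈ s, c ν, AHGp.bd_sub (AHGp.bd_mono hk (by linarith)) ?_⟩
        apply AHGp.bd_sum _ _ (by linarith)
        intro ν hν
        apply AHGp.bd_mono (hc ν)
        have := Finset.single_le_sum (f := c) (fun ν _ => hc0 ν) hν
        linarith
      obtain ⟨c, hc⟩ := hbdd
      have h3 := AHGp.bd_mul (AHGp.bd_mono (AHGp.memR_bd (AHGp.bd_memR hc)) h2.le) hfg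
      rw [mul_assoc, hAg, mul_one] at h3
      convert h3 using 1
      rw [sub_mul, Finset.sum_mul]
      congr 1
      apply Finset.sum_congr rfl
      intro ν _
      rw [AHGp.eta_eq, hzt, mul_assoc])
  obtain ⟨hC, hne⟩ := hcore
  have hκ : κ ≠ 0 := by
    rintro rfl
    apply hne
    simp [hη]
  have hff : AHG.frobR p (ξ μ0) * AHG.frobR p g = 1 := by
    rw [← AHGp.frob_mul, hg, AHGp.frob_one]
  have hcf : MvPowerSeries.constantCoeff (AHG.frobR p (ξ μ0)) ≠ 0 := by
    intro h
    have := congrArg MvPowerSeries.constantCoeff hff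
    rw [map_mul, h, zero_mul, map_one] at this
    exact zero_ne_one this
  have hinveq : (AHG.frobR p (ξ μ0))⁻¹ = AHG.frobR p g := by
    rw [MvPowerSeries.inv_eq_iff_mul_eq_one hcf, mul_comm]
    exact hff
  rw [hinveq]
  have hfin : ξ μ0 * AHG.frobR p g = κ⁻¹ • η μ0 := by
    simp only [hη]
    rw [smul_mul_assoc, smul_smul, inv_mul_cancel₀ hκ, one_smul]
  rw [hfin]
  exact AHGp.memR'_of_Cl p a (AHGp.Cl_smul hΦ _ hC)
end

section
/- For every integer m ≥ 1, the series Σ_{l=0}^∞ (−1)^l · l! · π^{−1−l} · b_{p(l+1)−m} converges in K (with the convention b_j = 0 for j < 0) and its sum equals p·(−1)^{m−1}·(m−1)!·π^{−m}. (This is the coefficientwise form of the identity H(λ_0,x) = p·G(λ_0,x) of the paper, where G(λ_0,x) = Σ_{l≥0} (−1)^l l! (πλ_0 x^{â_0})^{−1−l} and H(λ_0,x) = γ_−( exp(π(λ_0 x^{â_0} − λ_0^p x^{p·â_0})) · G(λ_0^p, x^p) ), γ_− denoting truncation to negative powers of λ_0 x^{â_0}.) -/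
open scoped BigOperators Classical

open scoped BigOperators Classical

lemma desc_dvd_of_not_dvd (p n : ℕ) [hp : Fact p.Prime] (hn : ¬ p ∣ n) (hpn : p ≤ n) :
    p ∣ (n - 1).descFactorial (p - 1) := by
  rw [Nat.descFactorial_eq_prod_range]
  have h1 : n % p ≠ 0 := fun h => hn (Nat.dvd_of_mod_eq_zero h)
  have h2 : n % p < p := Nat.mod_lt _ hp.out.pos
  have h3 := Nat.div_add_mod n p
  refine dvd_trans ?_ (Finset.dvd_prod_of_mem _ (Finset.mem_range.2 (show n % p - 1 < p - 1 by omega)))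
  refine ⟨n / p, ?_⟩
  omega

lemma desc_add_one_dvd (p n : ℕ) [hp : Fact p.Prime] (hn : p ∣ n) (hn0 : 0 < n) :
    p ∣ (n - 1).descFactorial (p - 1) + 1 := by
  rw [← CharP.cast_eq_zero_iff (ZMod p)]
  have h2 := hp.out.pos
  obtain ⟨k, rfl⟩ := hn
  have hk : 0 < k := Nat.pos_of_mul_pos_left hn0 |> fun h => by
    rcases Nat.eq_zero_or_pos k with rfl | h
    · simp at hn0
    · exact h
  obtain ⟨k, rfl⟩ : ∃ j, k = j + 1 := ⟨k - 1, by omega⟩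
  have : (((p * (k + 1) - 1).descFactorial (p - 1) : ℕ) : ZMod p) = (((p - 1).descFactorial (p - 1) : ℕ) : ZMod p) := by
    rw [Nat.descFactorial_eq_prod_range, Nat.descFactorial_eq_prod_range]
    push_cast
    refine Finset.prod_congr rfl fun i hi => ?_
    rw [Finset.mem_range] at hi
    have : p * (k + 1) - 1 - i = p * k + (p - 1 - i) := by
      rw [mul_add]; omega
    rw [this]
    simp
  push_cast
  rw [this, Nat.descFactorial_self, ZMod.wilsons_lemma]
  simp

section
variable {p : ℕ} [hp : Fact p.Prime] {K : Type*} [NormedField K] [IsUltrametricDist K]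

lemma norm_natCast_eq_padic (ι : ℚ_[p] →+* K) (hι : ∀ x, ‖ι x‖ = ‖x‖) (n : ℕ) :
    ‖(n : K)‖ = ‖(n : ℚ_[p])‖ := by
  rw [← hι, map_natCast]

lemma norm_natCast_le_inv (ι : ℚ_[p] →+* K) (hι : ∀ x, ‖ι x‖ = ‖x‖) (n : ℕ) (h : p ∣ n) :
    ‖(n : K)‖ ≤ (p : ℝ)⁻¹ := by
  obtain ⟨k, rfl⟩ := h
  rw [norm_natCast_eq_padic ι hι]
  push_cast
  rw [norm_mul, Padic.norm_p]
  have : ‖(k : ℚ_[p])‖ ≤ 1 := by exact_mod_cast Padic.norm_int_le_one (p := p) k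
  have h2 : (0 : ℝ) ≤ (p : ℝ)⁻¹ := by positivity
  nlinarith

lemma T_bound (ι : ℚ_[p] →+* K) (hι : ∀ x, ‖ι x‖ = ‖x‖) (T : ℕ → K) (h0 : T 0 = 1)
    (h1 : ∀ n, n + 1 < p → T (n + 1) = T n)
    (h2 : ∀ n, p ≤ n + 1 → T (n + 1) = T n + (n.descFactorial (p - 1) : ℕ) * T (n + 1 - p)) :
    ∀ j n, 2 * p * j ≤ n → ‖T n‖ ≤ ((p : ℝ)⁻¹) ^ j := by
  have hp0 := hp.out.pos
  have hpi : (0 : ℝ) ≤ (p : ℝ)⁻¹ := by positivity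
  intro j
  induction j with
  | zero =>
    intro n _
    rw [pow_zero]
    induction n using Nat.strong_induction_on with
    | _ n ih =>
      rcases n with _ | n
      · simp [h0]
      · by_cases h : n + 1 < p
        · rw [h1 n h]; exact ih n (by omega) (by omega)
        · rw [h2 n (by omega)]
          refine (IsUltrametricDist.norm_add_le_max _ _).trans (max_le (ih n (by omega) (by omega)) ?_)
          rw [norm_mul]
          exact mul_le_one₀ (IsUltrametricDist.norm_natCast_le_one K _) (norm_nonneg _)
            (ih _ (by omega) (by omega))
  | succ j ih =>
    set N := 2 * p * j with hN
    have hNN : 2 * p * (j + 1) = N + 2 * p := by ring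
    -- non multiples
    have A : ∀ n, N + p ≤ n + 1 → ¬ p ∣ n + 1 → ‖T (n + 1) - T n‖ ≤ ((p : ℝ)⁻¹) ^ (j + 1) := by
      intro n hn hd
      rw [h2 n (by omega), add_sub_cancel_left, norm_mul, pow_succ']
      exact mul_le_mul (norm_natCast_le_inv ι hι _ (desc_dvd_of_not_dvd p (n + 1) hd (by omega)))
        (ih _ (by omega)) (norm_nonneg _) hpi
    have A' : ∀ k r, N + p ≤ p * k → r < p → ‖T (p * k + r) - T (p * k)‖ ≤ ((p : ℝ)⁻¹) ^ (j + 1) := by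
      intro k r hk
      induction r with
      | zero => intro _; simp
      | succ r ihr =>
        intro hr
        have e : T (p * k + (r + 1)) - T (p * k) =
          (T (p * k + r + 1) - T (p * k + r)) + (T (p * k + r) - T (p * k)) := by
          rw [← add_assoc]; ring
        rw [e]
        refine (IsUltrametricDist.norm_add_le_max _ _).trans (max_le (A _ (by omega) ?_) (ihr (by omega)))
        rw [add_assoc, Nat.dvd_add_right (dvd_mul_right p k)]
        exact Nat.not_dvd_of_pos_of_lt (by omega) hr
    have B : ∀ k, N + 2 * p ≤ p * (k + 1) → ‖T (p * (k + 1))‖ ≤ ((p : ℝ)⁻¹) ^ (j + 1) := by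
      intro k hk
      have hk' : p * (k + 1) = p * k + p := by ring
      have e1 : p * (k + 1) = (p * k + (p - 1)) + 1 := by omega
      have e := h2 (p * k + (p - 1)) (by omega)
      have e3 : p * k + (p - 1) + 1 - p = p * k := by omega
      rw [← e1, e1, e3] at e
      have e2 : T (p * (k + 1)) = (T (p * k + (p - 1)) - T (p * k)) +
          (((p * k + (p - 1)).descFactorial (p - 1) + 1 : ℕ) : K) * T (p * k) := by
        rw [e1, e]; push_cast; ring
      rw [e2]
      refine (IsUltrametricDist.norm_add_le_max _ _).trans (max_le (A' _ _ (by omega) (by omega)) ?_)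
      rw [norm_mul, pow_succ']
      refine mul_le_mul (norm_natCast_le_inv ι hι _ ?_)
        (ih _ (by omega)) (norm_nonneg _) hpi
      have := desc_add_one_dvd p (p * (k + 1)) (dvd_mul_right _ _) (by positivity)
      rwa [e1, Nat.add_sub_cancel] at this
    intro n hn
    rw [hNN] at hn
    have h3 := Nat.div_add_mod n p
    have h4 : n % p < p := Nat.mod_lt _ hp0
    have h5 : N + 2 * p ≤ p * (n / p) := by
      have : 2 * j + 2 ≤ n / p := by
        rw [Nat.le_div_iff_mul_le hp0]; nlinarith
      calc N + 2 * p = p * (2 * j + 2) := by rw [hN]; ring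
        _ ≤ _ := Nat.mul_le_mul_left _ this
    have h6 := A' (n / p) (n % p) (by omega) h4
    rw [h3] at h6
    obtain ⟨k, hk⟩ : ∃ k, n / p = k + 1 := ⟨n / p - 1, by
      rcases Nat.eq_zero_or_pos (n / p) with h | h
      · rw [h] at h5; omega
      · omega⟩
    rw [hk] at h5 h6
    have h7 := B k h5
    rw [← sub_add_cancel (T n) (T (p * (k + 1)))]
    exact (IsUltrametricDist.norm_add_le_max _ _).trans (max_le h6 h7)

lemma norm_pi_pow (ι : ℚ_[p] →+* K) (hι : ∀ x, ‖ι x‖ = ‖x‖) (π : K)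
    (hπ : π ^ (p - 1) = -(p : K)) : ‖π‖ ^ (p - 1) = (p : ℝ)⁻¹ := by
  rw [← norm_pow, hπ, norm_neg, norm_natCast_eq_padic ι hι, Padic.norm_p]

lemma norm_factorial_pow (ι : ℚ_[p] →+* K) (hι : ∀ x, ‖ι x‖ = ‖x‖) (n : ℕ) :
    ‖(n.factorial : K)‖ ^ (p - 1) = ((p : ℝ)⁻¹) ^ (n - (p.digits n).sum) := by
  rw [norm_natCast_eq_padic ι hι, Padic.norm_eq_zpow_neg_valuation (by
    exact_mod_cast n.factorial_ne_zero), Padic.valuation_natCast, zpow_neg, zpow_natCast, ← inv_pow,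
    ← pow_mul, mul_comm, sub_one_mul_padicValNat_factorial]

lemma norm_pi_le_factorial (ι : ℚ_[p] →+* K) (hι : ∀ x, ‖ι x‖ = ‖x‖) (π : K)
    (hπ : π ^ (p - 1) = -(p : K)) (n : ℕ) : ‖π‖ ^ n ≤ ‖(n.factorial : K)‖ := by
  have hp1 := hp.out.one_lt
  refine le_of_pow_le_pow_left₀ (n := p - 1) (by omega) (norm_nonneg _) ?_
  rw [norm_factorial_pow ι hι, ← pow_mul, mul_comm, pow_mul, norm_pi_pow ι hι π hπ]
  exact pow_le_pow_of_le_one (by positivity) (inv_le_one_of_one_le₀ (by exact_mod_cast hp1.le)) (by omega)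

lemma norm_factorial_le (ι : ℚ_[p] →+* K) (hι : ∀ x, ‖ι x‖ = ‖x‖) (π : K)
    (hπ : π ^ (p - 1) = -(p : K)) (n : ℕ) :
    ‖(n.factorial : K)‖ ≤ p * (n + 1) * ‖π‖ ^ n := by
  have hp1 := hp.out.one_lt
  have hp0 : (0 : ℝ) < p := by exact_mod_cast hp.out.pos
  have hlen : p ^ (p.digits n).length ≤ p * (n + 1) := by
    rcases Nat.eq_zero_or_pos n with rfl | hn
    · simp; omega
    · exact (Nat.base_pow_length_digits_le p n (by omega) hn.ne').trans (by nlinarith)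
  have hs : (p.digits n).sum ≤ (p.digits n).length * (p - 1) := by
    have := List.sum_le_card_nsmul (p.digits n) (p - 1) (fun d hd => by
      have := Nat.digits_lt_base hp1 hd; omega)
    simpa using this
  have hsn := Nat.digit_sum_le p n
  refine le_of_pow_le_pow_left₀ (n := p - 1) (by omega) (by positivity) ?_
  rw [norm_factorial_pow ι hι, mul_pow, ← pow_mul, mul_comm n, pow_mul, norm_pi_pow ι hι π hπ]
  have e : ((p : ℝ)⁻¹) ^ (n - (p.digits n).sum) = (p : ℝ) ^ (p.digits n).sum * ((p : ℝ)⁻¹) ^ n := by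
    obtain ⟨d, hd⟩ : ∃ d, d = (p.digits n).sum := ⟨_, rfl⟩
    rw [← hd] at hsn ⊢
    obtain ⟨c, rfl⟩ : ∃ c, n = c + d := ⟨n - d, by omega⟩
    rw [Nat.add_sub_cancel, pow_add, mul_left_comm, ← mul_pow,
      mul_inv_cancel₀ hp0.ne', one_pow, mul_one]
  rw [e]
  gcongr
  calc (p : ℝ) ^ (p.digits n).sum ≤ (p : ℝ) ^ ((p.digits n).length * (p - 1)) :=
        pow_le_pow_right₀ (by exact_mod_cast hp1.le) hs
    _ = ((p : ℝ) ^ (p.digits n).length) ^ (p - 1) := pow_mul _ _ _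
    _ ≤ _ := by
      gcongr
      exact_mod_cast hlen

end

/-- Coefficients of `exp(πt)`, indexed by integers. -/
noncomputable def expCoefZ {K : Type*} [Field K] (π : K) (j : ℤ) : K :=
  if 0 ≤ j then π ^ j.toNat / (j.toNat.factorial : K) else 0

/-- Dwork coefficients, indexed by integers. -/
noncomputable def dworkZ (p : ℕ) {K : Type*} [Field K] (π : K) (n : ℤ) : K :=
  ∑ k ∈ Finset.range (n.toNat + 1), expCoefZ π (n - p * k) * ((-1) ^ k * π ^ k / (k.factorial : K))

section
variable {p : ℕ} [hp : Fact p.Prime] {K : Type*} [Field K]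

lemma expCoefZ_neg (π : K) (j : ℤ) (hj : j < 0) : expCoefZ π j = 0 := by
  rw [expCoefZ, if_neg (by omega)]

lemma expCoefZ_rec [CharZero K] (π : K) (j : ℤ) : (j : K) * expCoefZ π j = π * expCoefZ π (j - 1) := by
  rcases lt_trichotomy j 0 with h | rfl | h
  · rw [expCoefZ_neg π j h, expCoefZ_neg π _ (by omega)]; simp
  · rw [expCoefZ_neg π (0 - 1) (by omega)]; simp
  · obtain ⟨n, rfl⟩ : ∃ n : ℕ, j = n + 1 := ⟨(j - 1).toNat, by omega⟩
    rw [expCoefZ, expCoefZ, if_pos (by omega), if_pos (by omega)]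
    have e1 : ((n : ℤ) + 1).toNat = n + 1 := by omega
    have e2 : ((n : ℤ) + 1 - 1).toNat = n := by omega
    rw [e1, e2, Nat.factorial_succ]
    have h1 : ((n : K) + 1) ≠ 0 := by exact_mod_cast n.succ_ne_zero
    have h2 : (n.factorial : K) ≠ 0 := by exact_mod_cast n.factorial_ne_zero
    push_cast
    field_simp
    ring

lemma dworkZ_eq_range (π : K) (n : ℤ) (N : ℕ) (hN : n.toNat + 1 ≤ N) :
    dworkZ p π n = ∑ k ∈ Finset.range N, expCoefZ π (n - p * k) *
      ((-1) ^ k * π ^ k / (k.factorial : K)) := by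
  rw [dworkZ]
  refine Finset.sum_subset (fun k hk => ?_) (fun k hk hk2 => ?_)
  · simp at *; omega
  · rw [expCoefZ_neg, zero_mul]
    simp at hk2
    have : 1 ≤ p := hp.out.pos
    have h3 : (k : ℤ) ≤ p * k := by exact_mod_cast Nat.le_mul_of_pos_left k this
    omega

lemma dworkZ_neg (π : K) (n : ℤ) (hn : n < 0) : dworkZ p π n = 0 := by
  rw [dworkZ]
  refine Finset.sum_eq_zero fun k _ => ?_
  rw [expCoefZ_neg, zero_mul]
  have : (0 : ℤ) ≤ p * k := by positivity
  omega

lemma dworkZ_zero (π : K) : dworkZ p π 0 = 1 := by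
  simp [dworkZ, expCoefZ]

lemma dworkZ_natCast (π : K) (n : ℕ) : dworkZ p π n = AHG.dworkB p π n := by
  rw [dworkZ, AHG.dworkB]
  refine Finset.sum_congr (by simp) fun k _ => ?_
  split_ifs with h
  · have h' : (0 : ℤ) ≤ n - p * k := by
      have : ((p * k : ℕ) : ℤ) ≤ n := by exact_mod_cast h
      push_cast at this; omega
    rw [expCoefZ, if_pos h']
    have e : ((n : ℤ) - p * k).toNat = n - p * k := by
      have : (n : ℤ) - p * k = n - (p * k : ℕ) := by push_cast; ring
      rw [this]; omega
    rw [e, pow_add, div_mul_div_comm]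
    ring
  · rw [expCoefZ_neg, zero_mul]
    have : (n : ℤ) < ((p * k : ℕ) : ℤ) := by exact_mod_cast not_le.1 h
    push_cast at this; omega

lemma dworkZ_rec [CharZero K] (π : K) (n : ℤ) :
    (n : K) * dworkZ p π n = π * dworkZ p π (n - 1) - p * π * dworkZ p π (n - p) := by
  have hp0 := hp.out.pos
  rw [dworkZ_eq_range (p := p) π n (n.toNat + 1 + 1) (by omega),
    dworkZ_eq_range (p := p) π (n - 1) (n.toNat + 1 + 1) (by omega),
    dworkZ_eq_range (p := p) π (n - p) (n.toNat + 1) (by omega)]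
  have e1 : ∀ k : ℕ, (n : K) * (expCoefZ π (n - p * k) * ((-1) ^ k * π ^ k / (k.factorial : K))) =
      π * (expCoefZ π (n - 1 - p * k) * ((-1) ^ k * π ^ k / (k.factorial : K))) +
      p * (k * (expCoefZ π (n - p * k) * ((-1) ^ k * π ^ k / (k.factorial : K)))) := by
    intro k
    have := expCoefZ_rec π (n - p * k)
    rw [show n - 1 - (p : ℤ) * k = n - p * k - 1 by ring]
    push_cast at this
    linear_combination ((-1) ^ k * π ^ k / (k.factorial : K)) * this
  rw [Finset.mul_sum, Finset.sum_congr rfl (fun k _ => e1 k), Finset.sum_add_distrib,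
    ← Finset.mul_sum, ← Finset.mul_sum, sub_eq_add_neg (π * _)]
  congr 1
  rw [Finset.sum_range_succ', mul_assoc, ← mul_neg, ← neg_mul, Finset.mul_sum]
  simp only [Nat.cast_zero, zero_mul, add_zero]
  congr 1
  refine Finset.sum_congr rfl fun k _ => ?_
  rw [show n - (p : ℤ) - p * k = n - p * ((k + 1 : ℕ) : ℤ) by push_cast; ring, Nat.factorial_succ]
  have h1 : ((k : K) + 1) ≠ 0 := by exact_mod_cast k.succ_ne_zero
  have h2 : (k.factorial : K) ≠ 0 := by exact_mod_cast k.factorial_ne_zero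
  push_cast
  field_simp
  ring

end

section
variable {p : ℕ} [hp : Fact p.Prime] {K : Type*} [NormedField K] [IsUltrametricDist K]

lemma dworkZ_bound [CharZero K] (ι : ℚ_[p] →+* K) (hι : ∀ x, ‖ι x‖ = ‖x‖) (π : K)
    (hπ : π ^ (p - 1) = -(p : K)) (hπ0 : π ≠ 0) (j n : ℕ) (h : 2 * p * j ≤ n) :
    ‖dworkZ p π n‖ ≤ ((p : ℝ)⁻¹) ^ j := by
  have hp0 := hp.out.pos
  have hfac : ∀ n : ℕ, (n.factorial : K) ≠ 0 := fun n => by exact_mod_cast n.factorial_ne_zero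
  have hT := T_bound ι hι (fun n => (n.factorial : K) * dworkZ p π n / π ^ n)
    (by simp [dworkZ_zero])
    (by
      intro n hn
      have := dworkZ_rec (p := p) π ((n + 1 : ℕ) : ℤ)
      rw [dworkZ_neg π (((n + 1 : ℕ) : ℤ) - p) (by push_cast; omega),
        show ((n + 1 : ℕ) : ℤ) - 1 = n by push_cast; ring] at this
      have e : ((n + 1).factorial : K) * dworkZ p π ((n + 1 : ℕ) : ℤ) = n.factorial * (π * dworkZ p π n) := by
        rw [Nat.factorial_succ]
        push_cast at this ⊢
        linear_combination (n.factorial : K) * this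
      simp only [e, pow_succ]
      field_simp)
    (by
      intro n hn
      have := dworkZ_rec (p := p) π ((n + 1 : ℕ) : ℤ)
      rw [show ((n + 1 : ℕ) : ℤ) - p = ((n + 1 - p : ℕ) : ℤ) by omega,
        show ((n + 1 : ℕ) : ℤ) - 1 = n by push_cast; ring] at this
      have hd := Nat.factorial_mul_descFactorial (n := n) (k := p - 1) (by omega)
      rw [show n - (p - 1) = n + 1 - p by omega] at hd
      have hd' : (n.factorial : K) = ((n + 1 - p).factorial : K) * (n.descFactorial (p - 1) : ℕ) := by
        exact_mod_cast hd.symm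
      have hpp : π ^ p = -(p : K) * π := by
        rw [← hπ, ← pow_succ]; congr 1; omega
      have e : ((n + 1).factorial : K) * dworkZ p π ((n + 1 : ℕ) : ℤ) =
          n.factorial * (π * dworkZ p π n) + n.factorial * (π ^ p * dworkZ p π ((n + 1 - p : ℕ) : ℤ)) := by
        rw [Nat.factorial_succ, hpp]
        push_cast at this ⊢
        linear_combination (n.factorial : K) * this
      have e4 : π ^ (n + 1) = π ^ (n + 1 - p) * π ^ p := by
        rw [← pow_add]; congr 1; omega
      simp only [e]
      rw [add_div]
      congr 1
      · rw [pow_succ]; field_simp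
      · rw [e4, hd']; field_simp) j n h
  have h1 : dworkZ p π n = (π ^ n / n.factorial) * ((n.factorial : K) * dworkZ p π n / π ^ n) := by
    have := hfac n
    field_simp
  rw [h1, norm_mul]
  have h2 : ‖π ^ n / (n.factorial : K)‖ ≤ 1 := by
    rw [norm_div, norm_pow]
    exact div_le_one_of_le₀ (norm_pi_le_factorial ι hι π hπ n) (norm_nonneg _)
  calc _ ≤ 1 * ((p : ℝ)⁻¹) ^ j := mul_le_mul h2 hT (norm_nonneg _) zero_le_one
    _ = _ := one_mul _

/-- The coefficient `(-1)^l l! π^{-1-l}`. -/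
noncomputable def gCoef (π : K) (l : ℕ) : K := (-1 : K) ^ l * (l.factorial : K) * π ^ (-1 - (l : ℤ))

lemma gCoef_succ (π : K) (hπ0 : π ≠ 0) (l : ℕ) : gCoef π (l + 1) = -((l + 1 : ℕ) : K) / π * gCoef π l := by
  rw [gCoef, gCoef, Nat.factorial_succ, show -1 - ((l + 1 : ℕ) : ℤ) = (-1 - (l : ℤ)) - 1 by push_cast; ring,
    zpow_sub_one₀ hπ0]
  push_cast
  field_simp
  ring

lemma gCoef_bound (ι : ℚ_[p] →+* K) (hι : ∀ x, ‖ι x‖ = ‖x‖) (π : K)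
    (hπ : π ^ (p - 1) = -(p : K)) (hπ0 : π ≠ 0) (l : ℕ) :
    ‖gCoef π l‖ ≤ p * (l + 1) * ‖π‖⁻¹ := by
  have h0 : 0 < ‖π‖ := norm_pos_iff.2 hπ0
  have := norm_factorial_le ι hι π hπ l
  rw [gCoef, zpow_sub₀ hπ0, zpow_natCast]
  simp only [norm_mul, norm_pow, norm_neg, norm_one, one_pow, one_mul, norm_div, zpow_neg, zpow_one, norm_inv]
  calc ‖(l.factorial : K)‖ * (‖π‖⁻¹ / ‖π‖ ^ l) ≤ (p * (l + 1) * ‖π‖ ^ l) * (‖π‖⁻¹ / ‖π‖ ^ l) := by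
        gcongr
    _ = _ := by field_simp

lemma tendsto_aux (ι : ℚ_[p] →+* K) (hι : ∀ x, ‖ι x‖ = ‖x‖) [CharZero K] (π : K)
    (hπ : π ^ (p - 1) = -(p : K)) (hπ0 : π ≠ 0) (m : ℕ) :
    Filter.Tendsto (fun l : ℕ => gCoef π l * dworkZ p π (p * (l + 1) - m)) Filter.cofinite (nhds 0) := by
  have hp1 : (1 : ℝ) < p := by exact_mod_cast hp.out.one_lt
  have hp0 := hp.out.pos
  set ρ : ℝ := Real.sqrt ((p : ℝ)⁻¹) with hρ
  have hρ2 : ρ ^ 2 = (p : ℝ)⁻¹ := Real.sq_sqrt (by positivity)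
  have hρ0 : 0 < ρ := Real.sqrt_pos.2 (by positivity)
  have hρ1 : ρ < 1 := by
    rw [hρ, Real.sqrt_lt' one_pos, one_pow]
    exact inv_lt_one_of_one_lt₀ hp1
  rw [Nat.cofinite_eq_atTop]
  have hlim : Filter.Tendsto (fun l : ℕ => (p * ‖π‖⁻¹ * ρ⁻¹ ^ (m + 2)) * (((l + 1 : ℕ) : ℝ) * ρ ^ (l + 1)))
      Filter.atTop (nhds 0) := by
    have := (tendsto_self_mul_const_pow_of_lt_one hρ0.le hρ1).comp (Filter.tendsto_add_atTop_nat 1)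
    simpa using this.const_mul (p * ‖π‖⁻¹ * ρ⁻¹ ^ (m + 2))
  refine squeeze_zero_norm' ?_ hlim
  filter_upwards [Filter.eventually_ge_atTop m] with l hl
  obtain ⟨x, rfl⟩ : ∃ x, l = m + x := ⟨l - m, by omega⟩
  have hn : m + p * x ≤ p * (m + x + 1) := by nlinarith
  have hcast : (p : ℤ) * (((m + x : ℕ) : ℤ) + 1) - m = ((p * (m + x + 1) - m : ℕ) : ℤ) := by
    rw [Nat.cast_sub (by omega)]; push_cast; ring
  have hb := dworkZ_bound ι hι π hπ hπ0 (x / 2) (p * (m + x + 1) - m) (by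
    have h2 : 2 * (x / 2) ≤ x := by omega
    have : 2 * p * (x / 2) ≤ p * x := by
      calc 2 * p * (x / 2) = p * (2 * (x / 2)) := by ring
        _ ≤ p * x := Nat.mul_le_mul_left _ h2
    omega)
  rw [hcast, norm_mul]
  have h3 : ((p : ℝ)⁻¹) ^ (x / 2) ≤ ρ⁻¹ ^ (m + 2) * ρ ^ (m + x + 1) := by
    rw [← hρ2, ← pow_mul]
    have e : ρ⁻¹ ^ (m + 2) * ρ ^ (m + x + 1) = ρ⁻¹ * ρ ^ x := by
      rw [inv_pow]; field_simp; ring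
    rw [e, inv_mul_eq_div, le_div_iff₀ hρ0, ← pow_succ]
    exact pow_le_pow_of_le_one hρ0.le hρ1.le (by omega)
  calc _ ≤ (p * ((m + x : ℕ) + 1) * ‖π‖⁻¹) * (ρ⁻¹ ^ (m + 2) * ρ ^ (m + x + 1)) :=
        mul_le_mul (gCoef_bound ι hι π hπ hπ0 _) (hb.trans h3) (norm_nonneg _) (by positivity)
    _ = _ := by push_cast; ring

lemma hasSum_of_eq {f g : ℕ → K} {a : K} (h : HasSum f a) (e : ∀ l, g l = f l) : HasSum g a := by
  rwa [funext e]

lemma hasSum_step [CompleteSpace K] (ι : ℚ_[p] →+* K) (hι : ∀ x, ‖ι x‖ = ‖x‖) [CharZero K] (π : K)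
    (hπ : π ^ (p - 1) = -(p : K)) (hπ0 : π ≠ 0) (m : ℕ) (S : K)
    (hS : HasSum (fun l : ℕ => (m : K) * (gCoef π l * dworkZ p π (p * (l + 1) - m))) S) :
    HasSum (fun l : ℕ => gCoef π l * dworkZ p π (p * (l + 1) - (m + 1 : ℕ)))
      (p / π * dworkZ p π (-m) - S / π) := by
  have ht := tendsto_aux ι hι π hπ hπ0 m
  have hU : Summable (fun l : ℕ => ((l + 1 : ℕ) : K) * (gCoef π l * dworkZ p π (p * (l + 1) - m))) := by
    refine NonarchimedeanAddGroup.summable_of_tendsto_cofinite_zero ?_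
    refine squeeze_zero_norm (fun l => ?_) (tendsto_zero_iff_norm_tendsto_zero.1 ht)
    rw [norm_mul]
    exact mul_le_of_le_one_left (norm_nonneg _) (IsUltrametricDist.norm_natCast_le_one K _)
  obtain ⟨U, hU⟩ := hU
  have hV : HasSum (fun l : ℕ => gCoef π l * dworkZ p π (p * l - m))
      (-U / π + π⁻¹ * dworkZ p π (-m)) := by
    have h := (hasSum_nat_add_iff (f := fun l : ℕ => gCoef π l * dworkZ p π (p * l - m)) 1
      (g := -U / π)).1 (by
        have e1 : -U / π = -π⁻¹ * U := by ring
        rw [e1]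
        refine hasSum_of_eq (hU.mul_left (-π⁻¹)) fun l => ?_
        rw [gCoef_succ π hπ0]
        push_cast
        ring)
    simpa [gCoef] using h
  have key := ((hU.mul_left (p / π)).sub (hS.mul_left (π⁻¹))).add (hV.mul_left (p : K))
  have e1 : p / π * dworkZ p π (-m) - S / π =
      p / π * U - π⁻¹ * S + p * (-U / π + π⁻¹ * dworkZ p π (-m)) := by ring
  rw [e1]
  refine hasSum_of_eq key fun l => ?_
  have := dworkZ_rec (p := p) π (p * (l + 1) - m)
  rw [show (p : ℤ) * (l + 1) - m - p = p * l - m by ring,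
    show (p : ℤ) * (l + 1) - m - 1 = p * (l + 1) - (m + 1 : ℕ) by push_cast; ring] at this
  push_cast at this ⊢
  field_simp
  linear_combination -(gCoef π l) * this
end

/-- for every `m ≥ 1`,
`Σ_{l≥0} (-1)^l l! π^{-1-l} b_{p(l+1)-m} = p (-1)^{m-1} (m-1)! π^{-m}`
(with `b_j = 0` for `j < 0`); this is the coefficientwise form of `H = p·G`. -/
theorem stmt_16 (p : ℕ) [Fact p.Prime] (hp2 : p ≠ 2)
    {K : Type*} [NormedField K] [IsUltrametricDist K] [CompleteSpace K] [IsAlgClosed K]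
    (ι : ℚ_[p] →+* K) (hι : ∀ x, ‖ι x‖ = ‖x‖)
    (π : K) (hπ : π ^ (p - 1) = -(p : K))
    (m : ℕ) (hm : 1 ≤ m) :
    HasSum (fun l : ℕ =>
      if m ≤ p * (l + 1) then
        (-1 : K) ^ l * (Nat.factorial l : K) * π ^ (-1 - (l : ℤ)) *
          AHG.dworkB p π (p * (l + 1) - m)
      else 0)
      ((p : K) * (-1 : K) ^ (m - 1) * (Nat.factorial (m - 1) : K) * π ^ (-(m : ℤ))) := by
  have hprime : p.Prime := Fact.out
  have : CharZero K := charZero_of_injective_ringHom ι.injective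
  have hπ0 : π ≠ 0 := by
    rintro rfl
    rw [zero_pow (by have := hprime.one_lt; omega)] at hπ
    exact hprime.ne_zero (by exact_mod_cast (neg_eq_zero.1 hπ.symm))
  have main : ∀ n : ℕ, HasSum (fun l : ℕ => gCoef π l * dworkZ p π (p * (l + 1) - (n + 1 : ℕ)))
      ((p : K) * (-1 : K) ^ n * (Nat.factorial n : K) * π ^ (-((n + 1 : ℕ) : ℤ))) := by
    intro n
    induction n with
    | zero =>
      have := hasSum_step ι hι π hπ hπ0 0 0 (by simp)
      convert this using 1
      simp [dworkZ_zero, div_eq_mul_inv]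
    | succ n ih =>
      have := hasSum_step ι hι π hπ hπ0 (n + 1) _ (ih.mul_left ((n + 1 : ℕ) : K))
      convert this using 1
      rw [dworkZ_neg π _ (by push_cast; omega), Nat.factorial_succ,
        show -((n + 1 + 1 : ℕ) : ℤ) = -((n + 1 : ℕ) : ℤ) - 1 by push_cast; ring, zpow_sub_one₀ hπ0]
      push_cast
      ring
  obtain ⟨n, rfl⟩ : ∃ n, m = n + 1 := ⟨m - 1, by omega⟩
  refine hasSum_of_eq (main n) fun l => ?_
  split_ifs with h
  · rw [gCoef, ← dworkZ_natCast, Nat.cast_sub h]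
    push_cast
    rfl
  · rw [dworkZ_neg, mul_zero]
    have : ((p * (l + 1) : ℕ) : ℤ) < ((n + 1 : ℕ) : ℤ) := by exact_mod_cast not_le.1 h
    push_cast at this ⊢
    omega
end
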